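/- arXiv:1105.5913 — 2 statements merged into one kernel-verified Lean document; each statement's English description precedes it below -/
import Mathlib

section
/- Let p = p(n) ∈ (0,1) and assume h³ = o(p²n⁴). Let β_n = h√((1−p)/(pN)) and λ_n = |𝒮|p^h, and assume liminf_{n→∞} β_n > 0. Suppose that for every constant C > 0 and every sequence of integers m(n) with |m(n) − pN| ≤ C√(pN), one has X_n / E_{G(n,m)}[X_n] → 1 in probability in G(n,m). Then in G(n,p): P(X_n > 0) → 1 and, for every x ∈ ℝ, P( X_n > 0 and ln(e^{β_n²/2} X_n/λ_n)/β_n ≤ x ) → Φ(x), where Φ is the standard normal distribution function; that is, ln(e^{β_n²/2} X_n/λ_n)/β_n converges in distribution to 𝒩(0,1). -/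
/-!
Write `a = pN`, `σ² = pN(1-p)` and `T = (|G| - a)/σ` for the standardised number of edges. The
number of edges carries all the randomness of `X_n` on the logarithmic scale: the normalised
logarithm `Y = ln(e^{β²/2} X_n/λ_n)/β` satisfies `Y - T → 0` in probability in `G(n,p)`.

* Given `|G| = m`, the graph is distributed as `G(n,m)`, where `X_n` is close to its mean
  `μ = |S| (m)_h/(N)_h` by hypothesis. The hypothesis concerns individual sequences `m(n)`, but it
  is automatically uniform over `|m - a| ≤ C√a` (`uniform_of_forall_seq`), so it transfers to
  `G(n,p)` (`PrGnp_le_of_PrGnm_le`).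
* Expanding `ln((m-i)/(N-i)) - ln p` to first order in `(m - a - (1-p)i)/a` and summing over `i < h`
  gives `ln(μ/λ_n) = h(m-a)/a - (1-p)h²/(2a) + O(h(m-a)²/a² + h³/a² + h/a)`, which is
  `βT - β²/2 + o(1)` (`log_prod_bound`, `abs_log_count_sub_stdEdges_le`).
* With `r = h³/a² → 0`, the bound `β ≥ c` forces `h/a ≤ r/c²` and `σ² ≥ c⁶/r²`, so `h/a → 0` and
  `σ → ∞` (`growth_bounds`); no assumption on `p` is needed beyond this.
* Since `σ → ∞`, Lévy's continuity theorem gives `T → 𝒩(0,1)` in distribution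
  (`tendsto_PrGnp_stdEdges`), and continuity of `Φ` carries the limit over to `Y`.
-/

open Finset Filter MeasureTheory
open scoped Classical

noncomputable section

/-- The edge set of the complete graph on the vertex set `[n] = Fin n`. -/
def edgesAll (n : ℕ) : Finset (Sym2 (Fin n)) :=
  Finset.univ.filter fun e => ¬ e.IsDiag

/-- `N = C(n,2)`, the number of possible edges. -/
def Nn (n : ℕ) : ℕ := n.choose 2

/-- Probability of an event under the uniform random graph `G(n,m)`
(uniform over all graphs on `[n]` with exactly `m` edges). -/
def PrGnm (n m : ℕ) (A : Finset (Sym2 (Fin n)) → Prop) : ℝ :=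
  ((((edgesAll n).powersetCard m).filter A).card : ℝ) /
    (((edgesAll n).powersetCard m).card : ℝ)

/-- Probability of an event under the binomial random graph `G(n,p)`
(each of the `N` possible edges included independently with probability `p`). -/
def PrGnp (n : ℕ) (p : ℝ) (A : Finset (Sym2 (Fin n)) → Prop) : ℝ :=
  ∑ G ∈ (edgesAll n).powerset.filter A,
    p ^ G.card * (1 - p) ^ ((edgesAll n).card - G.card)

/-- Expectation of a real-valued graph functional under `G(n,m)`. -/
def ExGnm (n m : ℕ) (X : Finset (Sym2 (Fin n)) → ℝ) : ℝ :=
  (∑ G ∈ (edgesAll n).powersetCard m, X G) /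
    (((edgesAll n).powersetCard m).card : ℝ)

/-- Expectation of a real-valued graph functional under `G(n,p)`. -/
def ExGnp (n : ℕ) (p : ℝ) (X : Finset (Sym2 (Fin n)) → ℝ) : ℝ :=
  ∑ G ∈ (edgesAll n).powerset,
    p ^ G.card * (1 - p) ^ ((edgesAll n).card - G.card) * X G

/-- `X_n`: the number of members of the family `S` contained in the graph `G`. -/
def countSub (n : ℕ) (S : Finset (Finset (Sym2 (Fin n)))) (G : Finset (Sym2 (Fin n))) : ℕ :=
  (S.filter fun H => H ⊆ G).card

/-- `f_j`: the number of ordered pairs `(H₁,H₂) ∈ S × S` with exactly `j` common edges. -/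
def fj (n : ℕ) (S : Finset (Finset (Sym2 (Fin n)))) (j : ℕ) : ℕ :=
  ((S ×ˢ S).filter fun P => (P.1 ∩ P.2).card = j).card

/-- `r_j = f_j / f_{j-1}`. -/
def rj (n : ℕ) (S : Finset (Finset (Sym2 (Fin n)))) (j : ℕ) : ℝ :=
  (fj n S j : ℝ) / (fj n S (j - 1) : ℝ)

/-- The standard normal distribution function `Φ`. -/
def stdNormalCDF (x : ℝ) : ℝ :=
  ∫ t in Set.Iic x, Real.exp (-(t ^ 2) / 2) / Real.sqrt (2 * Real.pi)


/-! ### Elementary facts about `G(n,p)` -/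

lemma card_edgesAll (n : ℕ) : (edgesAll n).card = Nn n := by
  have h := Sym2.card_subtype_not_diag (α := Fin n)
  rw [Fintype.card_subtype, Fintype.card_fin] at h
  unfold edgesAll Nn
  convert h

/-- The `G(n,p)`-probability of the single graph `G`. -/
def wGnp (n : ℕ) (p : ℝ) (G : Finset (Sym2 (Fin n))) : ℝ :=
  p ^ G.card * (1 - p) ^ ((edgesAll n).card - G.card)

lemma wGnp_nonneg {n : ℕ} {p : ℝ} (hp : 0 < p ∧ p < 1) (G : Finset (Sym2 (Fin n))) :
    0 ≤ wGnp n p G :=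
  mul_nonneg (pow_nonneg hp.1.le _) (pow_nonneg (by linarith [hp.2]) _)

lemma sum_wGnp (n : ℕ) (p : ℝ) : ∑ G ∈ (edgesAll n).powerset, wGnp n p G = 1 := by
  unfold wGnp
  rw [Finset.sum_pow_mul_eq_add_pow]
  simp

lemma PrGnp_eq (n : ℕ) (p : ℝ) (A : Finset (Sym2 (Fin n)) → Prop) :
    PrGnp n p A = ∑ G ∈ (edgesAll n).powerset, if A G then wGnp n p G else 0 := by
  unfold PrGnp wGnp
  rw [Finset.sum_filter]

lemma PrGnp_nonneg {n : ℕ} {p : ℝ} (hp : 0 < p ∧ p < 1) (A : Finset (Sym2 (Fin n)) → Prop) :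
    0 ≤ PrGnp n p A :=
  Finset.sum_nonneg fun G _ => wGnp_nonneg hp G

lemma PrGnp_mono {n : ℕ} {p : ℝ} (hp : 0 < p ∧ p < 1) {A B : Finset (Sym2 (Fin n)) → Prop}
    (h : ∀ G ⊆ edgesAll n, A G → B G) : PrGnp n p A ≤ PrGnp n p B := by
  rw [PrGnp_eq, PrGnp_eq]
  refine Finset.sum_le_sum fun G hG => ?_
  have h1 := h G (Finset.mem_powerset.1 hG)
  have h2 := wGnp_nonneg hp G
  split_ifs <;> tauto

lemma PrGnp_or_le {n : ℕ} {p : ℝ} (hp : 0 < p ∧ p < 1) (A B : Finset (Sym2 (Fin n)) → Prop) :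
    PrGnp n p (fun G => A G ∨ B G) ≤ PrGnp n p A + PrGnp n p B := by
  rw [PrGnp_eq, PrGnp_eq, PrGnp_eq, ← Finset.sum_add_distrib]
  refine Finset.sum_le_sum fun G hG => ?_
  have h2 := wGnp_nonneg hp G
  by_cases hA : A G <;> by_cases hB : B G <;> simp [hA, hB, h2]

lemma PrGnp_not (n : ℕ) (p : ℝ) (A : Finset (Sym2 (Fin n)) → Prop) :
    PrGnp n p (fun G => ¬ A G) = 1 - PrGnp n p A := by
  rw [PrGnp_eq, PrGnp_eq, ← sum_wGnp n p, ← Finset.sum_sub_distrib]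
  refine Finset.sum_congr rfl fun G _ => ?_
  by_cases hA : A G <;> simp [hA]

/-! ### The central limit theorem for the number of edges of `G(n,p)` -/

/-- The standardised number of edges `(|G| - pN) / √(Np(1-p))` of a graph `G`. -/
def stdEdges (n : ℕ) (p : ℝ) (G : Finset (Sym2 (Fin n))) : ℝ :=
  ((G.card : ℝ) - p * Nn n) / Real.sqrt (Nn n * (p * (1 - p)))

/-- The law on `ℝ` of the standardised number of edges of `G(n,p)`. -/
def edgeLaw (n : ℕ) (p : ℝ) : Measure ℝ :=
  ∑ G ∈ (edgesAll n).powerset, ENNReal.ofReal (wGnp n p G) • Measure.dirac (stdEdges n p G)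

lemma edgeLaw_apply {n : ℕ} {p : ℝ} (hp : 0 < p ∧ p < 1) {s : Set ℝ} (hs : MeasurableSet s) :
    edgeLaw n p s = ENNReal.ofReal (PrGnp n p fun G => stdEdges n p G ∈ s) := by
  rw [edgeLaw, Measure.finsetSum_apply, PrGnp_eq, ENNReal.ofReal_sum_of_nonneg]
  · refine Finset.sum_congr rfl fun G _ => ?_
    rw [Measure.smul_apply, Measure.dirac_apply' _ hs]
    by_cases h : stdEdges n p G ∈ s <;> simp [h]
  · intro G _
    split_ifs
    · exact wGnp_nonneg hp G
    · exact le_rfl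

lemma isProbabilityMeasure_edgeLaw {n : ℕ} {p : ℝ} (hp : 0 < p ∧ p < 1) :
    IsProbabilityMeasure (edgeLaw n p) := by
  constructor
  rw [edgeLaw_apply hp MeasurableSet.univ, PrGnp_eq]
  simp [sum_wGnp]

/-- The characteristic function of a standardised binomial variable. -/
lemma charFun_edgeLaw {n : ℕ} {p : ℝ} (hp : 0 < p ∧ p < 1) (t : ℝ) :
    charFun (edgeLaw n p) t =
      (p * Complex.exp (((1 - p) * (t / Real.sqrt (Nn n * (p * (1 - p)))) : ℝ) * Complex.I)
        + (1 - p) * Complex.exp ((-p * (t / Real.sqrt (Nn n * (p * (1 - p)))) : ℝ) * Complex.I))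
      ^ Nn n := by
  set s : ℝ := t / Real.sqrt (Nn n * (p * (1 - p))) with hs
  rw [charFun_apply_real, edgeLaw, integral_finsetSum_measure]
  · rw [← card_edgesAll n, ← Finset.sum_pow_mul_eq_add_pow]
    refine Finset.sum_congr rfl fun G hG => ?_
    have hle : G.card ≤ (edgesAll n).card := Finset.card_le_card (Finset.mem_powerset.1 hG)
    obtain ⟨k, hk⟩ := Nat.exists_eq_add_of_le hle
    rw [integral_smul_measure, integral_dirac, ENNReal.toReal_ofReal (wGnp_nonneg hp G), wGnp,
      mul_pow, mul_pow, ← Complex.exp_nat_mul, ← Complex.exp_nat_mul]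
    have hexp : Complex.exp (t * stdEdges n p G * Complex.I) =
        Complex.exp (G.card * (((1 - p) * s : ℝ) * Complex.I)) *
        Complex.exp (((edgesAll n).card - G.card : ℕ) * ((-p * s : ℝ) * Complex.I)) := by
      rw [← Complex.exp_add]
      congr 1
      have : t * stdEdges n p G = ((G.card : ℝ) - p * Nn n) * s := by
        rw [stdEdges, hs]; ring
      rw [← Complex.ofReal_mul, this, ← card_edgesAll n, hk]
      simp only [Nat.add_sub_cancel_left]
      push_cast
      ring
    rw [hexp, Complex.real_smul]
    push_cast
    ring
  · intro G _
    refine Integrable.smul_measure ?_ ENNReal.ofReal_ne_top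
    exact integrable_dirac (by simp)

lemma norm_pow_sub_pow_le_mul {a b : ℂ} (ha : ‖a‖ ≤ 1) (hb : ‖b‖ ≤ 1) (k : ℕ) :
    ‖a ^ k - b ^ k‖ ≤ k * ‖a - b‖ := by
  induction k with
  | zero => simp
  | succ k ih =>
    have : a ^ (k + 1) - b ^ (k + 1) = a ^ k * (a - b) + (a ^ k - b ^ k) * b := by ring
    rw [this]
    refine (norm_add_le _ _).trans ?_
    rw [norm_mul, norm_mul, norm_pow]
    have h1 : ‖a‖ ^ k ≤ 1 := pow_le_one₀ (norm_nonneg _) ha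
    push_cast
    nlinarith [norm_nonneg (a - b), norm_nonneg (a ^ k - b ^ k), norm_nonneg b]

lemma norm_exp_I_taylor {x : ℝ} (hx : |x| ≤ 1) :
    ‖Complex.exp (x * Complex.I) - (1 + x * Complex.I - x ^ 2 / 2)‖ ≤ |x| ^ 3 := by
  have hn : ‖(x : ℂ) * Complex.I‖ = |x| := by simp
  have h := Complex.exp_bound (x := x * Complex.I) (by rw [hn]; exact hx) (n := 3) (by norm_num)
  rw [hn] at h
  have e : ∑ m ∈ range 3, ((x : ℂ) * Complex.I) ^ m / (m.factorial : ℂ)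
      = 1 + x * Complex.I - x ^ 2 / 2 := by
    simp [Finset.sum_range_succ, mul_pow, Nat.factorial]
    ring
  rw [e] at h
  refine h.trans ?_
  have : 0 ≤ |x| ^ 3 := by positivity
  norm_num [Nat.factorial]
  nlinarith

/-- Second-order expansion of the characteristic function of a centred Bernoulli variable. -/
lemma norm_bernoulli_charFun {p s : ℝ} (hp : 0 < p ∧ p < 1) (hs : |s| ≤ 1) :
    ‖(p * Complex.exp (((1 - p) * s : ℝ) * Complex.I)
        + (1 - p) * Complex.exp ((-p * s : ℝ) * Complex.I) : ℂ)
      - (1 + (-(p * (1 - p) * s ^ 2 / 2) : ℝ))‖ ≤ p * (1 - p) * |s| ^ 3 := by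
  obtain ⟨hp0, hp1⟩ := hp
  have hq : 0 < 1 - p := by linarith
  have a1 : |(1 - p) * s| ≤ 1 := by
    rw [abs_mul, abs_of_pos hq]; nlinarith [abs_nonneg s]
  have a2 : |-p * s| ≤ 1 := by
    rw [abs_mul, abs_neg, abs_of_pos hp0]; nlinarith [abs_nonneg s]
  have e1 := norm_exp_I_taylor a1
  have e2 := norm_exp_I_taylor a2
  set A := Complex.exp (((1 - p) * s : ℝ) * Complex.I)
  set B := Complex.exp ((-p * s : ℝ) * Complex.I)
  have key : (p * A + (1 - p) * B : ℂ) - (1 + (-(p * (1 - p) * s ^ 2 / 2) : ℝ))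
      = (p : ℝ) * (A - (1 + ((1 - p) * s : ℝ) * Complex.I - (((1 - p) * s : ℝ) : ℂ) ^ 2 / 2))
      + ((1 - p : ℝ) : ℂ) * (B - (1 + (-p * s : ℝ) * Complex.I - ((-p * s : ℝ) : ℂ) ^ 2 / 2)) := by
    push_cast
    ring
  rw [key]
  refine (norm_add_le _ _).trans ?_
  rw [norm_mul, norm_mul, Complex.norm_real, Complex.norm_real, Real.norm_of_nonneg hp0.le,
    Real.norm_of_nonneg hq.le]
  rw [abs_mul, abs_of_pos hq] at e1
  rw [abs_mul, abs_neg, abs_of_pos hp0] at e2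
  have h3 : 0 ≤ |s| ^ 3 := by positivity
  have c1 := mul_le_mul_of_nonneg_left e1 hp0.le
  have c2 := mul_le_mul_of_nonneg_left e2 hq.le
  have hpq : (1 - p) ^ 2 + p ^ 2 ≤ 1 := by nlinarith
  have : p * ((1 - p) * |s|) ^ 3 + (1 - p) * (p * |s|) ^ 3
      = (p * (1 - p) * |s| ^ 3) * ((1 - p) ^ 2 + p ^ 2) := by ring
  have h4 : 0 ≤ p * (1 - p) * |s| ^ 3 := by positivity
  nlinarith

lemma norm_charFun_edgeLaw_sub_le {n : ℕ} {p : ℝ} (hp : 0 < p ∧ p < 1) (t : ℝ)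
    (hN : 0 < Nn n) (ht : |t| ≤ Real.sqrt (Nn n * (p * (1 - p))))
    (ht2 : t ^ 2 / 2 ≤ Nn n) :
    ‖charFun (edgeLaw n p) t - Complex.exp ((-(t ^ 2 / 2) : ℝ))‖ ≤
      |t| ^ 3 / Real.sqrt (Nn n * (p * (1 - p))) + (t ^ 2 / 2) ^ 2 / Nn n := by
  have hp0 := hp.1
  have hq : 0 < 1 - p := by linarith [hp.2]
  have hN' : (0 : ℝ) < Nn n := by exact_mod_cast hN
  rw [charFun_edgeLaw hp]
  set σ := Real.sqrt (Nn n * (p * (1 - p))) with hσ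
  have hσ0 : 0 < σ := Real.sqrt_pos.2 (by positivity)
  have hσ2 : σ ^ 2 = Nn n * (p * (1 - p)) := Real.sq_sqrt (by positivity)
  set s := t / σ with hs
  have hs1 : |s| ≤ 1 := by rw [hs, abs_div, abs_of_pos hσ0]; exact (div_le_one hσ0).2 ht
  have hb := norm_bernoulli_charFun hp hs1
  set τ : ℝ := -(t ^ 2 / 2) / Nn n with hτ
  have e : -(p * (1 - p) * s ^ 2 / 2) = τ := by
    have : p * (1 - p) = σ ^ 2 / Nn n := by rw [hσ2]; field_simp
    rw [this, hs, hτ]; field_simp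
  rw [e] at hb
  set z : ℂ := p * Complex.exp (((1 - p) * s : ℝ) * Complex.I)
        + (1 - p) * Complex.exp ((-p * s : ℝ) * Complex.I) with hz
  have hz1 : ‖z‖ ≤ 1 := by
    rw [hz]
    refine (norm_add_le _ _).trans ?_
    rw [norm_mul, norm_mul, Complex.norm_exp_ofReal_mul_I, Complex.norm_exp_ofReal_mul_I,
      Complex.norm_real, Real.norm_of_nonneg hp0.le,
      show (1 - p : ℂ) = ((1 - p : ℝ) : ℂ) by push_cast; rfl,
      Complex.norm_real, Real.norm_of_nonneg hq.le]
    linarith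
  have hb1 : ‖Complex.exp (τ : ℂ)‖ ≤ 1 := by
    rw [Complex.norm_exp_ofReal, Real.exp_le_one_iff, hτ]
    exact div_nonpos_of_nonpos_of_nonneg (by nlinarith [sq_nonneg t]) hN'.le
  have hτ1 : ‖(τ : ℂ)‖ = t ^ 2 / 2 / Nn n := by
    rw [Complex.norm_real, hτ, Real.norm_eq_abs, abs_div, abs_neg, abs_of_pos hN',
      abs_of_nonneg (by positivity)]
  have hE := Complex.norm_exp_sub_one_sub_id_le (x := (τ : ℂ))
    (by rw [hτ1]; exact (div_le_one hN').2 ht2)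
  have hpow : Complex.exp ((-(t ^ 2 / 2) : ℝ)) = Complex.exp (τ : ℂ) ^ Nn n := by
    rw [← Complex.exp_nat_mul]
    congr 1
    rw [hτ]; push_cast
    have : (Nn n : ℂ) ≠ 0 := by exact_mod_cast hN.ne'
    field_simp
  rw [hpow]
  refine (norm_pow_sub_pow_le_mul hz1 hb1 _).trans ?_
  have hsub : ‖z - Complex.exp (τ : ℂ)‖ ≤ p * (1 - p) * |s| ^ 3 + (t ^ 2 / 2 / Nn n) ^ 2 := by
    have : z - Complex.exp (τ : ℂ) = (z - (1 + τ)) - (Complex.exp τ - 1 - τ) := by ring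
    rw [this]
    refine (norm_sub_le _ _).trans (add_le_add hb ?_)
    rw [← hτ1]; exact hE
  refine (mul_le_mul_of_nonneg_left hsub hN'.le).trans (le_of_eq ?_)
  have : p * (1 - p) = σ ^ 2 / Nn n := by rw [hσ2]; field_simp
  rw [this, hs, abs_div, abs_of_pos hσ0]
  field_simp

lemma gaussianReal_Iic (x : ℝ) :
    ProbabilityTheory.gaussianReal 0 1 (Set.Iic x) = ENNReal.ofReal (stdNormalCDF x) := by
  rw [ProbabilityTheory.gaussianReal_apply_eq_integral _ one_ne_zero, stdNormalCDF]
  congr 1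
  refine integral_congr_ae (Filter.Eventually.of_forall fun t => ?_)
  simp [ProbabilityTheory.gaussianPDFReal, div_eq_mul_inv, mul_comm]

lemma stdNormalCDF_nonneg (x : ℝ) : 0 ≤ stdNormalCDF x :=
  integral_nonneg fun t => by positivity

lemma stdNormalCDF_eq_cdf (x : ℝ) :
    stdNormalCDF x = ProbabilityTheory.cdf (ProbabilityTheory.gaussianReal 0 1) x := by
  rw [ProbabilityTheory.cdf_eq_real, Measure.real, gaussianReal_Iic,
    ENNReal.toReal_ofReal (stdNormalCDF_nonneg x)]

lemma tendsto_stdNormalCDF_atTop : Tendsto stdNormalCDF atTop (nhds 1) := by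
  rw [funext stdNormalCDF_eq_cdf]
  exact ProbabilityTheory.tendsto_cdf_atTop _

lemma tendsto_stdNormalCDF_atBot : Tendsto stdNormalCDF atBot (nhds 0) := by
  rw [funext stdNormalCDF_eq_cdf]
  exact ProbabilityTheory.tendsto_cdf_atBot _

lemma continuous_stdNormalCDF : Continuous stdNormalCDF := by
  have hint : Integrable (fun t : ℝ => Real.exp (-(t ^ 2) / 2) / Real.sqrt (2 * Real.pi)) := by
    have h := ProbabilityTheory.integrable_gaussianPDFReal 0 1
    refine h.congr (Filter.Eventually.of_forall fun t => ?_)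
    simp [ProbabilityTheory.gaussianPDFReal, div_eq_mul_inv, mul_comm]
  exact continuous_iff_continuousAt.2 fun x => by
    have := (intervalIntegral.continuous_primitive
      (fun a b => hint.intervalIntegrable) 0).continuousAt (x := x)
    have e : stdNormalCDF = fun y => stdNormalCDF 0 +
        ∫ t in (0:ℝ)..y, Real.exp (-(t ^ 2) / 2) / Real.sqrt (2 * Real.pi) := by
      funext y
      rw [← intervalIntegral.integral_Iic_sub_Iic hint.integrableOn hint.integrableOn]
      simp [stdNormalCDF]
    rw [e]
    exact continuousAt_const.add this

/-- De Moivre–Laplace for the triangular array of edge counts: it suffices that the variance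
tends to infinity. Proved by Lévy's continuity theorem. -/
lemma tendsto_PrGnp_stdEdges (p : ℕ → ℝ) (hp : ∀ n, 0 < p n ∧ p n < 1)
    (hσ : Tendsto (fun n => Real.sqrt (Nn n * (p n * (1 - p n)))) atTop atTop) (x : ℝ) :
    Tendsto (fun n => PrGnp n (p n) fun G => stdEdges n (p n) G ≤ x) atTop
      (nhds (stdNormalCDF x)) := by
  have hN : Tendsto (fun n => (Nn n : ℝ)) atTop atTop := by
    refine tendsto_atTop_mono' _ ?_ hσ
    filter_upwards [hσ.eventually_ge_atTop 1] with n hn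
    have h1 := (hp n).1
    have h2 := (hp n).2
    have h3 : Real.sqrt (Nn n * (p n * (1 - p n))) ^ 2 = Nn n * (p n * (1 - p n)) :=
      Real.sq_sqrt (mul_nonneg (Nat.cast_nonneg _) (mul_nonneg h1.le (by linarith)))
    have h4 : p n * (1 - p n) ≤ 1 := by nlinarith
    have h5 : (0 : ℝ) ≤ Nn n := Nat.cast_nonneg _
    nlinarith
  let ν : ℕ → ProbabilityMeasure ℝ := fun n =>
    ⟨edgeLaw n (p n), isProbabilityMeasure_edgeLaw (hp n)⟩
  let γ : ProbabilityMeasure ℝ := ⟨ProbabilityTheory.gaussianReal 0 1, inferInstance⟩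
  have hconv : Tendsto ν atTop (nhds γ) := by
    refine ProbabilityMeasure.tendsto_of_tendsto_charFun fun t => ?_
    have hγ : charFun (γ : Measure ℝ) t = Complex.exp ((-(t ^ 2 / 2) : ℝ)) := by
      change charFun (ProbabilityTheory.gaussianReal 0 1) t = _
      rw [ProbabilityTheory.charFun_gaussianReal]
      push_cast
      congr 1
      simp
    rw [hγ, tendsto_iff_norm_sub_tendsto_zero]
    have hlim : Tendsto (fun n => |t| ^ 3 / Real.sqrt (Nn n * (p n * (1 - p n)))
        + (t ^ 2 / 2) ^ 2 / (Nn n : ℝ)) atTop (nhds (0 + 0)) :=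
      (hσ.const_div_atTop _).add (hN.const_div_atTop _)
    rw [add_zero] at hlim
    refine squeeze_zero' (Filter.Eventually.of_forall fun n => norm_nonneg _) ?_ hlim
    filter_upwards [hσ.eventually_ge_atTop |t|, hN.eventually_ge_atTop (t ^ 2 / 2),
      hN.eventually_gt_atTop 0] with n h1 h2 h3
    exact norm_charFun_edgeLaw_sub_le (hp n) t (by exact_mod_cast h3) h1 h2
  have hfr : (γ : Measure ℝ) (frontier (Set.Iic x)) = 0 := by
    rw [frontier_Iic]
    change ProbabilityTheory.gaussianReal 0 1 {x} = 0
    have := ProbabilityTheory.nullSingletonClass_gaussianReal (μ := 0) (v := 1) one_ne_zero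
    exact measure_singleton x
  have h := ProbabilityMeasure.tendsto_measure_of_null_frontier_of_tendsto' hconv hfr
  have h' := (ENNReal.tendsto_toReal (measure_ne_top (γ : Measure ℝ) _)).comp h
  have eγ : ((γ : Measure ℝ) (Set.Iic x)).toReal = stdNormalCDF x := by
    change (ProbabilityTheory.gaussianReal 0 1 (Set.Iic x)).toReal = _
    rw [gaussianReal_Iic, ENNReal.toReal_ofReal (stdNormalCDF_nonneg x)]
  rw [eγ] at h'
  refine h'.congr fun n => ?_
  change (edgeLaw n (p n) (Set.Iic x)).toReal = _
  rw [edgeLaw_apply (hp n) measurableSet_Iic, ENNReal.toReal_ofReal (PrGnp_nonneg (hp n) _)]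
  rfl

/-! ### The mean of `X_n` in `G(n,m)` -/

/-- The mean of `X_n` in `G(n,m)` is `|S| (m)_h / (N)_h`. -/
lemma ExGnm_countSub {n m h : ℕ} {S : Finset (Finset (Sym2 (Fin n)))}
    (hS : ∀ H ∈ S, H ⊆ edgesAll n ∧ H.card = h) (hm : m ≤ Nn n) (hh : h ≤ m) :
    ExGnm n m (fun G => (countSub n S G : ℝ)) =
      S.card * ∏ i ∈ range h, (((m : ℝ) - i) / ((Nn n : ℝ) - i)) := by
  have hsum : ∑ G ∈ (edgesAll n).powersetCard m, countSub n S G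
      = S.card * (Nn n - h).choose (m - h) := by
    simp only [countSub]
    simp_rw [Finset.card_filter]
    rw [Finset.sum_comm, Finset.card_eq_sum_ones, Finset.sum_mul]
    refine Finset.sum_congr rfl fun H hH => ?_
    obtain ⟨h1, h2⟩ := hS H hH
    have hcard := Finset.card_filter_powersetCard_subset H (edgesAll n) m h1 (h2.trans_le hh)
    rw [card_edgesAll, h2] at hcard
    rw [← Finset.card_filter, one_mul, ← hcard]
  have hprod : ∏ i ∈ range h, (((m : ℝ) - i) / ((Nn n : ℝ) - i))
      = (m.choose h : ℝ) / ((Nn n).choose h) := by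
    have key : ∀ M : ℕ, h ≤ M → ∏ i ∈ range h, ((M : ℝ) - i) = h.factorial * M.choose h := by
      intro M hM
      rw [← Nat.cast_mul, ← Nat.descFactorial_eq_factorial_mul_choose,
        Nat.descFactorial_eq_prod_range, Nat.cast_prod]
      refine Finset.prod_congr rfl fun i hi => ?_
      rw [Nat.cast_sub]
      exact (Finset.mem_range.1 hi).le.trans hM
    rw [Finset.prod_div_distrib, key m hh, key _ (hh.trans hm)]
    have : (h.factorial : ℝ) ≠ 0 := by exact_mod_cast h.factorial_ne_zero
    field_simp
  have hc := Nat.choose_mul (n := Nn n) hh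
  have hc' : ((Nn n).choose m : ℝ) * m.choose h = (Nn n).choose h * (Nn n - h).choose (m - h) := by
    exact_mod_cast hc
  have p1 : ((Nn n).choose m : ℝ) ≠ 0 := by exact_mod_cast (Nat.choose_pos hm).ne'
  have p2 : ((Nn n).choose h : ℝ) ≠ 0 := by exact_mod_cast (Nat.choose_pos (hh.trans hm)).ne'
  rw [ExGnm, ← Nat.cast_sum, hsum, hprod, Finset.card_powersetCard, card_edgesAll]
  push_cast
  rw [mul_div_assoc]
  congr 1
  rw [div_eq_div_iff p1 p2]
  linarith

lemma abs_log_one_add_sub_le {u : ℝ} (hu : |u| ≤ 1 / 2) : |Real.log (1 + u) - u| ≤ 2 * u ^ 2 := by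
  have h := Real.abs_log_sub_add_sum_range_le (x := -u) (by rw [abs_neg]; linarith) 1
  simp only [Finset.sum_range_one, abs_neg, sub_neg_eq_add] at h
  norm_num at h
  rw [neg_add_eq_sub] at h
  refine h.trans ?_
  rw [div_le_iff₀ (by linarith)]
  nlinarith [sq_nonneg u]

lemma abs_log_le {y : ℝ} (hy : |y - 1| ≤ 1 / 2) : |Real.log y| ≤ 2 * |y - 1| := by
  have h := abs_log_one_add_sub_le hy
  rw [add_sub_cancel] at h
  have h2 : 2 * (y - 1) ^ 2 ≤ |y - 1| := by
    rw [← sq_abs]; nlinarith [abs_nonneg (y - 1)]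
  have := abs_sub_abs_le_abs_sub (Real.log y) (y - 1)
  linarith

/-- One factor of `(m)_h / (N)_h`, compared with its first-order approximation around `p`;
here `Δ = m - pN`. -/
lemma log_factor_bound {p N m h i : ℝ} (hp : 0 < p ∧ p < 1) (hi : 0 ≤ i) (hih : i ≤ h)
    (ha : 0 < p * N) (hh : h ≤ p * N / 4) (hD : |m - p * N| ≤ p * N / 8) :
    0 < (m - i) / (N - i) ∧
    |Real.log ((m - i) / (N - i)) - Real.log p - ((m - p * N) - (1 - p) * i) / (p * N)|
      ≤ 10 * ((m - p * N) ^ 2 + h ^ 2) / (p * N) ^ 2 := by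
  obtain ⟨hp0, hp1⟩ := hp
  have hN : 0 < N := pos_of_mul_pos_right ha hp0.le
  set a := p * N with haN
  set D := m - a with hDdef
  have haleN : a ≤ N := by nlinarith
  have hNi : 0 < N - i := by linarith
  have hb : 3 * a / 4 ≤ p * (N - i) := by nlinarith
  have hb0 : 0 < p * (N - i) := by positivity
  set w := D - (1 - p) * i with hw
  have hwabs : |w| ≤ |D| + h := by
    rw [hw]
    refine (abs_sub _ _).trans ?_
    rw [abs_of_nonneg (mul_nonneg (by linarith : (0:ℝ) ≤ 1 - p) hi)]
    nlinarith
  set u := w / (p * (N - i)) with hu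
  have huabs : |u| ≤ 4 / 3 * ((|D| + h) / a) := by
    rw [hu, abs_div, abs_of_pos hb0, div_le_iff₀ hb0]
    have : |D| + h ≤ 4 / 3 * ((|D| + h) / a) * (3 * a / 4) := by
      apply le_of_eq; field_simp
    refine hwabs.trans (this.trans ?_)
    have hh0 : 0 ≤ h := hi.trans hih
    exact mul_le_mul_of_nonneg_left hb (by positivity)
  have hu1 : |u| ≤ 1 / 2 := by
    refine huabs.trans ?_
    have : (|D| + h) / a ≤ 3 / 8 := by rw [div_le_iff₀ ha]; linarith
    linarith
  have heq : (m - i) / (N - i) = p * (1 + u) := by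
    rw [hu, hw, hDdef, haN]
    field_simp
    ring
  have h1u : 0 < 1 + u := by linarith [(abs_le.1 hu1).1]
  refine ⟨heq ▸ mul_pos hp0 h1u, ?_⟩
  rw [heq, Real.log_mul hp0.ne' h1u.ne']
  have hl := abs_log_one_add_sub_le hu1
  have hdiff : u - w / a = w * (p * i) / (a * (p * (N - i))) := by
    rw [hu]
    field_simp
    rw [haN]; ring
  have hh0 : 0 ≤ h := hi.trans hih
  have hpi : p * i ≤ h := by nlinarith
  have hd : |u - w / a| ≤ 2 * (D ^ 2 + h ^ 2) / a ^ 2 := by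
    rw [hdiff, abs_div, abs_mul, abs_of_nonneg (mul_nonneg hp0.le hi),
      abs_of_pos (mul_pos ha hb0), div_le_div_iff₀ (mul_pos ha hb0) (by positivity)]
    have s1 : |w| * (p * i) ≤ (|D| + h) * h := by gcongr
    have s2 : (|D| + h) * h ≤ 3 / 2 * (D ^ 2 + h ^ 2) := by
      rw [← sq_abs D]; nlinarith [sq_nonneg (|D| - h), sq_nonneg (|D|)]
    have s3 : 3 / 4 * a ^ 2 ≤ a * (p * (N - i)) := by nlinarith
    calc |w| * (p * i) * a ^ 2 ≤ 3 / 2 * (D ^ 2 + h ^ 2) * a ^ 2 := by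
          exact mul_le_mul_of_nonneg_right (s1.trans s2) (by positivity)
      _ = 2 * (D ^ 2 + h ^ 2) * (3 / 4 * a ^ 2) := by ring
      _ ≤ _ := by gcongr
  have hu2 : 2 * u ^ 2 ≤ 8 * (D ^ 2 + h ^ 2) / a ^ 2 := by
    have : u ^ 2 ≤ (4 / 3 * ((|D| + h) / a)) ^ 2 := by
      rw [← sq_abs u]; gcongr
    have e : (4 / 3 * ((|D| + h) / a)) ^ 2 = 16 / 9 * (|D| + h) ^ 2 / a ^ 2 := by
      rw [mul_pow, div_pow]; ring
    rw [e] at this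
    have : 2 * u ^ 2 ≤ 2 * (16 / 9 * (|D| + h) ^ 2 / a ^ 2) := by linarith
    refine this.trans ?_
    rw [← mul_div_assoc]
    refine div_le_div_of_nonneg_right ?_ (by positivity)
    rw [← sq_abs D]; nlinarith [sq_nonneg (|D| - h), sq_nonneg (|D|)]
  have tri : |Real.log p + Real.log (1 + u) - Real.log p - w / a|
      ≤ |Real.log (1 + u) - u| + |u - w / a| := by
    refine le_trans (le_of_eq ?_) (abs_add_le _ _)
    congr 1; ring
  have e10 : 10 * (D ^ 2 + h ^ 2) / a ^ 2
      = 8 * (D ^ 2 + h ^ 2) / a ^ 2 + 2 * (D ^ 2 + h ^ 2) / a ^ 2 := by ring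
  rw [e10]
  linarith

/-- The logarithm of `((m)_h / (N)_h) / p ^ h`, up to an error that vanishes when `h³ ≪ (pN)²` and
`m = pN + O(√(pN))`. -/
lemma log_prod_bound {p : ℝ} {N m h : ℕ} (hp : 0 < p ∧ p < 1)
    (ha : 0 < p * N) (hh : (h : ℝ) ≤ p * N / 4) (hD : |(m : ℝ) - p * N| ≤ p * N / 8) :
    0 < ∏ i ∈ range h, (((m : ℝ) - i) / ((N : ℝ) - i)) ∧
    |Real.log (∏ i ∈ range h, (((m : ℝ) - i) / ((N : ℝ) - i))) - h * Real.log p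
      - (h * (m - p * N) / (p * N) - (1 - p) * h ^ 2 / (p * N) / 2)|
      ≤ 10 * h * ((m - p * N) ^ 2 + h ^ 2) / (p * N) ^ 2 + h / (p * N) := by
  have hf : ∀ i ∈ range h, _ := fun i hi => log_factor_bound (N := N) (m := m) (h := h) hp
    (Nat.cast_nonneg i) (by exact_mod_cast (Finset.mem_range.1 hi).le) ha hh hD
  refine ⟨Finset.prod_pos fun i hi => (hf i hi).1, ?_⟩
  rw [Real.log_prod fun i hi => (hf i hi).1.ne']
  set a := p * N
  set D := (m : ℝ) - a
  have hsum : ∑ i ∈ range h, (D - (1 - p) * i) / a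
      = h * D / a - (1 - p) * (h * (h - 1) / 2) / a := by
    rw [← Finset.sum_div, Finset.sum_sub_distrib, ← Finset.mul_sum]
    have hg : ∑ i ∈ range h, (i : ℝ) = h * (h - 1) / 2 := by
      clear * -
      induction h with
      | zero => simp
      | succ k ih => rw [Finset.sum_range_succ, ih]; push_cast; ring
    rw [hg]
    simp
    ring
  have hmain : |∑ i ∈ range h, (Real.log (((m : ℝ) - i) / ((N : ℝ) - i)) - Real.log p
      - (D - (1 - p) * i) / a)| ≤ 10 * h * (D ^ 2 + h ^ 2) / a ^ 2 := by
    refine (Finset.abs_sum_le_sum_abs _ _).trans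
      ((Finset.sum_le_sum fun i hi => (hf i hi).2).trans (le_of_eq ?_))
    simp
    ring
  rw [Finset.sum_sub_distrib, hsum, Finset.sum_sub_distrib] at hmain
  simp only [Finset.sum_const, Finset.card_range, nsmul_eq_mul] at hmain
  have hq : |(1 - p) * h / a / 2| ≤ h / a := by
    rw [abs_of_nonneg (by have := hp.2; have : 0 ≤ 1 - p := by linarith
                          positivity)]
    have h0 : 0 ≤ (h : ℝ) / a := by positivity
    have : (1 - p) * h / a / 2 = (1 - p) / 2 * (h / a) := by ring
    rw [this]
    have := hp.1
    nlinarith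
  refine le_trans (le_of_eq ?_) ((abs_add_le _ _).trans (add_le_add hmain hq))
  congr 1
  ring

/-! ### Conditioning on the number of edges -/

/-- Given `|G| = m`, the random graph `G(n,p)` is `G(n,m)`; hence an event that is unlikely in
`G(n,m)` for every `m` in a window `W` is unlikely in `G(n,p)` together with `|G| ∈ W`. -/
lemma PrGnp_le_of_PrGnm_le {n : ℕ} {p δ : ℝ} (hp : 0 < p ∧ p < 1) (hδ : 0 ≤ δ) (W : ℕ → Prop)
    (A : ℕ → Finset (Sym2 (Fin n)) → Prop) (hW : ∀ m, W m → PrGnm n m (A m) ≤ δ) :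
    PrGnp n p (fun G => W G.card ∧ A G.card G) ≤ δ := by
  have hδ1 : δ = ∑ G ∈ (edgesAll n).powerset, δ * wGnp n p G := by
    rw [← Finset.mul_sum, sum_wGnp, mul_one]
  rw [PrGnp_eq]
  refine le_trans ?_ hδ1.ge
  rw [Finset.sum_powerset, Finset.sum_powerset]
  refine Finset.sum_le_sum fun j _ => ?_
  by_cases hj : W j
  · set w : ℝ := p ^ j * (1 - p) ^ ((edgesAll n).card - j) with hw
    have hw0 : 0 ≤ w :=
      mul_nonneg (pow_nonneg hp.1.le _) (pow_nonneg (by linarith [hp.2]) _)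
    have e1 : ∑ G ∈ (edgesAll n).powersetCard j,
        (if W G.card ∧ A G.card G then wGnp n p G else 0)
        = (((edgesAll n).powersetCard j).filter (A j)).card * w := by
      rw [← nsmul_eq_mul, ← Finset.sum_const, Finset.sum_filter]
      refine Finset.sum_congr rfl fun G hG => ?_
      have hc := (Finset.mem_powersetCard.1 hG).2
      simp [hc, hj, wGnp, hw]
    have e2 : ∑ G ∈ (edgesAll n).powersetCard j, δ * wGnp n p G
        = δ * ((edgesAll n).powersetCard j).card * w := by
      rw [mul_assoc, ← nsmul_eq_mul, ← Finset.sum_const, Finset.mul_sum]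
      refine Finset.sum_congr rfl fun G hG => ?_
      have hc := (Finset.mem_powersetCard.1 hG).2
      simp [hc, wGnp, hw]
    rw [e2]
    refine le_trans (le_of_eq (Eq.trans (by congr!) e1)) (mul_le_mul_of_nonneg_right ?_ hw0)
    have h := hW j hj
    unfold PrGnm at h
    rcases Nat.eq_zero_or_pos ((edgesAll n).powersetCard j).card with h0 | h0
    · have : (((edgesAll n).powersetCard j).filter (A j)).card = 0 :=
        Nat.le_zero.1 (h0 ▸ Finset.card_filter_le _ _)
      rw [this, h0]; simp
    · rwa [div_le_iff₀ (by exact_mod_cast h0)] at h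
  · refine Finset.sum_le_sum fun G hG => ?_
    have hc := (Finset.mem_powersetCard.1 hG).2
    simp only [hc, hj, false_and, if_false]
    exact mul_nonneg hδ (wGnp_nonneg hp G)

/-- Convergence along every sequence `m(n)` in the window is uniform over the window: otherwise
a sequence of bad choices of `m` would violate it. -/
lemma uniform_of_forall_seq {a : ℕ → ℝ} (ha : ∀ n, 0 ≤ a n) {f : ℕ → ℕ → ℝ} {C : ℝ} (hC : 1 ≤ C)
    (hf : ∀ m : ℕ → ℕ, (∀ n, |(m n : ℝ) - a n| ≤ C * Real.sqrt (a n)) →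
      Tendsto (fun n => f n (m n)) atTop (nhds 0)) {δ : ℝ} (hδ : 0 < δ) :
    ∀ᶠ n in atTop, ∀ m : ℕ, |(m : ℝ) - a n| ≤ C * Real.sqrt (a n) → f n m ≤ δ := by
  have hfloor : ∀ n, |((⌊a n⌋₊ : ℕ) : ℝ) - a n| ≤ C * Real.sqrt (a n) := by
    intro n
    have hs := Real.sqrt_nonneg (a n)
    have h1 : Real.sqrt (a n) ≤ C * Real.sqrt (a n) := by nlinarith
    refine le_trans ?_ h1
    have hsq := Real.sq_sqrt (ha n)
    have hle := Nat.floor_le (ha n)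
    have hlt := Nat.lt_floor_add_one (a n)
    rw [abs_sub_comm, abs_of_nonneg (by linarith)]
    by_cases h : a n < 1
    · rw [Nat.floor_eq_zero.2 h]
      have : Real.sqrt (a n) ≤ 1 := Real.sqrt_le_one.2 h.le
      push_cast
      nlinarith
    · have : 1 ≤ Real.sqrt (a n) := Real.one_le_sqrt.2 (not_lt.1 h)
      linarith
  let bad : ℕ → ℕ → Prop := fun n m => |(m : ℝ) - a n| ≤ C * Real.sqrt (a n) ∧ δ < f n m
  let m : ℕ → ℕ := fun n => if hb : ∃ k, bad n k then hb.choose else ⌊a n⌋₊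
  have hm : ∀ n, |(m n : ℝ) - a n| ≤ C * Real.sqrt (a n) := by
    intro n
    by_cases hb : ∃ k, bad n k
    · simp only [m, dif_pos hb]; exact hb.choose_spec.1
    · simp only [m, dif_neg hb]; exact hfloor n
  filter_upwards [(hf m hm).eventually_lt_const hδ] with n hn k hk
  by_contra hlt
  have hb : ∃ k, bad n k := ⟨k, hk, not_le.1 hlt⟩
  simp only [m, dif_pos hb] at hn
  exact absurd hb.choose_spec.2 (not_lt.2 hn.le)

/-! ### Comparison of `ln X_n` with the number of edges -/

/-- If `X_n` is close to its mean in `G(n,m)`, where `m = |G|` lies within `O(√(pN))` of `pN`, then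
the normalised logarithm of `X_n` is close to the standardised number of edges. -/
lemma abs_log_count_sub_stdEdges_le {n h : ℕ} {p β lam K ε : ℝ}
    {S : Finset (Finset (Sym2 (Fin n)))} {G : Finset (Sym2 (Fin n))} (hp : 0 < p ∧ p < 1)
    (hS : ∀ H ∈ S, H ⊆ edgesAll n ∧ H.card = h) (hG : G ⊆ edgesAll n)
    (hβ : β = (h : ℝ) * Real.sqrt ((1 - p) / (p * (Nn n : ℝ)))) (hβ0 : 0 < β)
    (hlam : lam = (S.card : ℝ) * p ^ h)
    (ha : 0 < p * (Nn n : ℝ)) (hh : (h : ℝ) ≤ p * Nn n / 4)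
    (hKa : K * Real.sqrt (p * Nn n) ≤ p * Nn n / 8)
    (hW : |(G.card : ℝ) - p * Nn n| ≤ K * Real.sqrt (p * Nn n))
    (hε : ε ≤ 1 / 2)
    (hX : |(countSub n S G : ℝ) / ExGnm n G.card (fun G' => (countSub n S G' : ℝ)) - 1| ≤ ε) :
    0 < countSub n S G ∧
    |Real.log (Real.exp (β ^ 2 / 2) * (countSub n S G : ℝ) / lam) / β - stdEdges n p G|
      ≤ (2 * ε + (10 * ((h : ℝ) ^ 3 / (p * Nn n) ^ 2) + (10 * K ^ 2 + 1) * (h / (p * Nn n)))) / β := by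
  have hq : 0 < 1 - p := by linarith [hp.2]
  have hp0 := hp.1
  have hm : G.card ≤ Nn n := by rw [← card_edgesAll]; exact Finset.card_le_card hG
  have hD := hW.trans hKa
  have hhm : h ≤ G.card := by
    have : (h : ℝ) ≤ G.card := by linarith [(abs_le.1 hD).1]
    exact_mod_cast this
  obtain ⟨hP, hlog⟩ := log_prod_bound hp ha hh hD
  rw [ExGnm_countSub hS hm hhm] at hX
  set P := ∏ i ∈ range h, (((G.card : ℝ) - i) / ((Nn n : ℝ) - i)) with hPdef
  set X : ℝ := (countSub n S G : ℝ) with hXdef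
  have hXne : X ≠ 0 := by
    intro h0
    rw [h0, zero_div, zero_sub, abs_neg, abs_one] at hX
    linarith
  have hXpos : 0 < countSub n S G := Nat.pos_of_ne_zero fun h0 => hXne (by rw [hXdef, h0]; simp)
  have hX0 : 0 < X := by rw [hXdef]; exact_mod_cast hXpos
  have hSpos : 0 < (S.card : ℝ) := by
    have : countSub n S G ≤ S.card := Finset.card_filter_le _ _
    exact_mod_cast hXpos.trans_le this
  refine ⟨hXpos, ?_⟩
  have hy0 : 0 < X / (S.card * P) := by positivity
  have hly := abs_log_le (hX.trans hε)
  have hsplit : Real.log (Real.exp (β ^ 2 / 2) * X / lam)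
      = β ^ 2 / 2 + Real.log (X / (S.card * P)) + (Real.log P - h * Real.log p) := by
    have : Real.exp (β ^ 2 / 2) * X / lam
        = Real.exp (β ^ 2 / 2) * (X / (S.card * P)) * (P / p ^ h) := by
      rw [hlam]; field_simp
    rw [this, Real.log_mul (by positivity) (by positivity), Real.log_mul (by positivity)
      (by positivity), Real.log_exp, Real.log_div hP.ne' (by positivity), Real.log_pow]
  set a := p * (Nn n : ℝ) with hadef
  have hβ2 : β ^ 2 = (1 - p) * h ^ 2 / a := by
    rw [hβ, mul_pow, Real.sq_sqrt (by positivity)]; ring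
  have hβT : β * stdEdges n p G = h * (G.card - a) / a := by
    rw [stdEdges, show (Nn n : ℝ) * (p * (1 - p)) = a * (1 - p) by rw [hadef]; ring, ← hadef, hβ,
      Real.sqrt_div hq.le, Real.sqrt_mul ha.le]
    have s1 : 0 < Real.sqrt a := Real.sqrt_pos.2 ha
    have s2 : 0 < Real.sqrt (1 - p) := Real.sqrt_pos.2 hq
    have s3 : Real.sqrt a ^ 2 = a := Real.sq_sqrt ha.le
    field_simp
    rw [s3]
  have hD2 : ((G.card : ℝ) - a) ^ 2 ≤ K ^ 2 * a := by
    rw [← sq_abs, ← Real.sq_sqrt ha.le, ← mul_pow, Real.sq_sqrt ha.le]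
    gcongr
  have herr : 10 * (h : ℝ) * ((G.card - a) ^ 2 + h ^ 2) / a ^ 2 + h / a
      ≤ 10 * ((h : ℝ) ^ 3 / a ^ 2) + (10 * K ^ 2 + 1) * (h / a) := by
    have : 10 * (h : ℝ) * ((G.card - a) ^ 2 + h ^ 2) / a ^ 2
        ≤ 10 * (h : ℝ) * (K ^ 2 * a + h ^ 2) / a ^ 2 := by gcongr
    have e : 10 * (h : ℝ) * (K ^ 2 * a + h ^ 2) / a ^ 2
        = 10 * ((h : ℝ) ^ 3 / a ^ 2) + 10 * K ^ 2 * (h / a) := by field_simp; ring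
    linarith
  have hfin : Real.log (Real.exp (β ^ 2 / 2) * X / lam) / β - stdEdges n p G
      = (Real.log (X / (S.card * P)) + (Real.log P - h * Real.log p
        - (h * (G.card - a) / a - (1 - p) * h ^ 2 / a / 2))) / β := by
    rw [eq_div_iff hβ0.ne', sub_mul, div_mul_cancel₀ _ hβ0.ne', mul_comm (stdEdges n p G), hβT,
      hsplit, hβ2]
    ring
  rw [hfin, abs_div, abs_of_pos hβ0]
  refine div_le_div_of_nonneg_right ((abs_add_le _ _).trans (add_le_add ?_ ?_)) hβ0.le
  · linarith
  · exact hlog.trans herr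

/-! ### Consequences of the growth assumptions -/

lemma tendsto_h_cube_div (p : ℕ → ℝ) (h : ℕ → ℕ) (hp : ∀ n : ℕ, 0 < p n ∧ p n < 1)
    (hom : (fun n : ℕ => (h n : ℝ) ^ 3) =o[atTop] fun n : ℕ => (p n) ^ 2 * (n : ℝ) ^ 4) :
    Tendsto (fun n => (h n : ℝ) ^ 3 / (p n * Nn n) ^ 2) atTop (nhds 0) := by
  have h1 := hom.tendsto_div_nhds_zero.const_mul 16
  rw [mul_zero] at h1
  refine squeeze_zero' (Eventually.of_forall fun n => by positivity) ?_ h1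
  filter_upwards [eventually_ge_atTop 2] with n hn
  have hn' : (2 : ℝ) ≤ n := by exact_mod_cast hn
  have hN : (Nn n : ℝ) = n * (n - 1) / 2 := by rw [Nn, Nat.cast_choose_two]
  have h4 : (n : ℝ) ^ 2 ≤ 4 * Nn n := by rw [hN]; nlinarith
  have hp0 := (hp n).1
  have hNpos : 0 < (Nn n : ℝ) := by nlinarith
  have hle : p n ^ 2 * (n : ℝ) ^ 4 ≤ 16 * (p n * Nn n) ^ 2 := by
    have : ((n : ℝ) ^ 2) ^ 2 ≤ (4 * Nn n) ^ 2 := by gcongr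
    have := mul_le_mul_of_nonneg_left this (sq_nonneg (p n))
    nlinarith
  have hpos : 0 < p n ^ 2 * (n : ℝ) ^ 4 := by positivity
  rw [← mul_div_assoc, div_le_div_iff₀ (by positivity) hpos]
  have h3 : (0 : ℝ) ≤ (h n : ℝ) ^ 3 := by positivity
  nlinarith

/-- With `r = h³/(pN)²`, the bound `β ≥ c` gives `h/(pN) ≤ r/c²` and `r² · pN(1-p) ≥ c⁶`. -/
lemma growth_bounds {p c a h : ℝ} (hp : 0 < p ∧ p < 1) (ha : 0 < a) (hh : 0 ≤ h) (hc : 0 < c)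
    (hβ : c ≤ h * Real.sqrt ((1 - p) / a)) :
    h / a ≤ h ^ 3 / a ^ 2 / c ^ 2 ∧ c ^ 6 ≤ (h ^ 3 / a ^ 2) ^ 2 * (a * (1 - p)) := by
  have hq : 0 < 1 - p := by linarith [hp.2]
  have hq1 : 1 - p ≤ 1 := by linarith [hp.1]
  have h1 : c ^ 2 ≤ h ^ 2 * ((1 - p) / a) := by
    have : c ^ 2 ≤ (h * Real.sqrt ((1 - p) / a)) ^ 2 := by gcongr
    rwa [mul_pow, Real.sq_sqrt (by positivity)] at this
  have h2 : c ^ 2 * a ≤ h ^ 2 * (1 - p) := by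
    rwa [← mul_div_assoc, le_div_iff₀ ha] at h1
  constructor
  · rw [div_div, div_le_div_iff₀ ha (by positivity)]
    have h3 : c ^ 2 * a ≤ h ^ 2 := h2.trans (by nlinarith [sq_nonneg h])
    have : h * a * (c ^ 2 * a) ≤ h * a * h ^ 2 := by gcongr
    nlinarith
  · have h3 : (c ^ 2 * a) ^ 3 ≤ (h ^ 2 * (1 - p)) ^ 3 := by gcongr
    have h4 : (1 - p) ^ 3 ≤ 1 - p := by
      have : (1 - p) ^ 2 ≤ 1 := by nlinarith
      nlinarith
    have h5 : c ^ 6 * a ^ 3 ≤ h ^ 6 * (1 - p) := by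
      calc c ^ 6 * a ^ 3 = (c ^ 2 * a) ^ 3 := by ring
        _ ≤ (h ^ 2 * (1 - p)) ^ 3 := h3
        _ = h ^ 6 * (1 - p) ^ 3 := by ring
        _ ≤ _ := by gcongr
    have e : (h ^ 3 / a ^ 2) ^ 2 * (a * (1 - p)) = h ^ 6 * (1 - p) / a ^ 3 := by field_simp
    rw [e, le_div_iff₀ (by positivity)]
    exact h5

lemma tendsto_atTop_of_mul_ge {r v : ℕ → ℝ} {c : ℝ} (hc : 0 < c) (hr : Tendsto r atTop (nhds 0))
    (hv : ∀ᶠ n in atTop, c ≤ r n ^ 2 * v n) : Tendsto v atTop atTop := by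
  rw [tendsto_atTop]
  intro B
  have h1 : Tendsto (fun n => r n ^ 2 * |B|) atTop (nhds 0) := by
    have := (hr.pow 2).mul_const |B|
    simpa using this
  filter_upwards [h1.eventually_lt_const hc, hv] with n h2 h3
  by_contra hlt
  have : r n ^ 2 * v n ≤ r n ^ 2 * |B| :=
    mul_le_mul_of_nonneg_left ((not_le.1 hlt).le.trans (le_abs_self B)) (sq_nonneg _)
  linarith

/-- **Theorem 2.3 (log-normality in `G(n,p)`).**
Assume `h³ = o(p²n⁴)`, `β_n = h√((1-p)/(pN))` with `liminf β_n > 0`, and that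
`X_n / E_{G(n,m)}[X_n] → 1` in probability for every `m = pN + O(√(pN))`.  Then in `G(n,p)`,
`P(X_n > 0) → 1` and `ln(e^{β_n²/2} X_n/λ_n)/β_n` converges in distribution to `𝒩(0,1)`. -/
theorem lognormal_Gnp
    (p : ℕ → ℝ) (h : ℕ → ℕ) (S : ∀ n : ℕ, Finset (Finset (Sym2 (Fin n))))
    (hp : ∀ n : ℕ, 0 < p n ∧ p n < 1)
    (hS : ∀ n : ℕ, ∀ H ∈ S n, H ⊆ edgesAll n ∧ H.card = h n)
    (hom : (fun n : ℕ => (h n : ℝ) ^ 3) =o[atTop] fun n : ℕ => (p n) ^ 2 * (n : ℝ) ^ 4)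
    (β lam : ℕ → ℝ)
    (hβ : ∀ n : ℕ, β n = (h n : ℝ) * Real.sqrt ((1 - p n) / (p n * (Nn n : ℝ))))
    (hlam : ∀ n : ℕ, lam n = ((S n).card : ℝ) * (p n) ^ (h n))
    -- `liminf β_n > 0`
    (hliminf : ∃ c : ℝ, 0 < c ∧ ∀ᶠ n : ℕ in atTop, c ≤ β n)
    -- concentration in `G(n,m)` for all `m = pN + O(√(pN))`
    (hconc : ∀ C : ℝ, 0 < C → ∀ m : ℕ → ℕ,
      (∀ n : ℕ, |(m n : ℝ) - p n * (Nn n : ℝ)| ≤ C * Real.sqrt (p n * (Nn n : ℝ))) →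
      ∀ ε : ℝ, 0 < ε →
        Tendsto (fun n : ℕ => PrGnm n (m n) fun G =>
          ε < |(countSub n (S n) G : ℝ) /
            ExGnm n (m n) (fun G' => (countSub n (S n) G' : ℝ)) - 1|) atTop (nhds 0)) :
    Tendsto (fun n : ℕ => PrGnp n (p n) fun G => 0 < countSub n (S n) G) atTop (nhds 1) ∧
    ∀ x : ℝ,
      Tendsto (fun n : ℕ => PrGnp n (p n) fun G =>
          0 < countSub n (S n) G ∧
          Real.log (Real.exp (β n ^ 2 / 2) * (countSub n (S n) G : ℝ) / lam n) / β n ≤ x)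
        atTop (nhds (stdNormalCDF x)) := by
  obtain ⟨c, hc, hcβ⟩ := hliminf
  have ha0 : ∀ n, 0 ≤ p n * (Nn n : ℝ) := fun n => mul_nonneg (hp n).1.le (Nat.cast_nonneg _)
  have hr := tendsto_h_cube_div p h hp hom
  -- `β n ≥ c > 0` excludes the degenerate case `N = 0`
  have hapos : ∀ᶠ n in atTop, 0 < p n * (Nn n : ℝ) := by
    filter_upwards [hcβ] with n hn
    refine lt_of_le_of_ne (ha0 n) fun h0 => ?_
    rw [hβ n, ← h0] at hn
    simp at hn
    linarith
  have hgrow : ∀ᶠ n in atTop, (h n : ℝ) / (p n * Nn n) ≤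
      (h n : ℝ) ^ 3 / (p n * Nn n) ^ 2 / c ^ 2 ∧
      c ^ 6 ≤ ((h n : ℝ) ^ 3 / (p n * Nn n) ^ 2) ^ 2 * (p n * Nn n * (1 - p n)) := by
    filter_upwards [hcβ, hapos] with n hn han
    rw [hβ n] at hn
    exact growth_bounds (hp n) han (Nat.cast_nonneg _) hc hn
  have hvar : Tendsto (fun n => p n * (Nn n : ℝ) * (1 - p n)) atTop atTop :=
    tendsto_atTop_of_mul_ge (c := c ^ 6) (by positivity) hr (hgrow.mono fun n hn => hn.2)
  have ha : Tendsto (fun n => p n * (Nn n : ℝ)) atTop atTop := by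
    refine tendsto_atTop_mono (fun n => ?_) hvar
    have := ha0 n
    have := (hp n).1
    nlinarith
  have hsqa : Tendsto (fun n => Real.sqrt (p n * (Nn n : ℝ))) atTop atTop :=
    Real.tendsto_sqrt_atTop.comp ha
  have hσ : Tendsto (fun n => Real.sqrt (Nn n * (p n * (1 - p n)))) atTop atTop := by
    refine (Real.tendsto_sqrt_atTop.comp hvar).congr fun n => ?_
    simp only [Function.comp]
    congr 1
    ring
  have hha : Tendsto (fun n => (h n : ℝ) / (p n * Nn n)) atTop (nhds 0) := by
    have h1 := hr.div_const (c ^ 2)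
    rw [zero_div] at h1
    exact squeeze_zero' (Eventually.of_forall fun n => div_nonneg (Nat.cast_nonneg _) (ha0 n))
      (hgrow.mono fun n hn => hn.1) h1
  have hclt := tendsto_PrGnp_stdEdges p hp hσ
  -- the normalised logarithm of `X_n`
  set Y : ∀ n, Finset (Sym2 (Fin n)) → ℝ := fun n G =>
    Real.log (Real.exp (β n ^ 2 / 2) * (countSub n (S n) G : ℝ) / lam n) / β n with hY
  have hbad : ∀ η : ℝ, 0 < η → Tendsto (fun n => PrGnp n (p n) fun G =>
      ¬ (0 < countSub n (S n) G ∧ |Y n G - stdEdges n (p n) G| ≤ η)) atTop (nhds 0) := by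
    intro η hη
    rw [Metric.tendsto_nhds]
    intro δ hδ
    obtain ⟨K, hK1, hKtop, hKbot⟩ : ∃ K : ℝ, 1 ≤ K ∧ 1 - δ / 4 < stdNormalCDF K ∧
        stdNormalCDF (-K) < δ / 4 := by
      have e1 := tendsto_stdNormalCDF_atTop.eventually_const_lt (show 1 - δ / 4 < 1 by linarith)
      have e2 := (tendsto_stdNormalCDF_atBot.comp tendsto_neg_atTop_atBot).eventually_lt_const
        (show (0 : ℝ) < δ / 4 by linarith)
      obtain ⟨K, h1, h2, h3⟩ := ((eventually_ge_atTop (1 : ℝ)).and (e1.and e2)).exists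
      exact ⟨K, h1, h2, h3⟩
    set ε := min (1 / 2) (c * η / 4) with hε
    have hε0 : 0 < ε := lt_min (by norm_num) (by positivity)
    have huni := uniform_of_forall_seq ha0 hK1
      (f := fun n m => PrGnm n m fun G =>
          ε < |(countSub n (S n) G : ℝ) /
            ExGnm n m (fun G' => (countSub n (S n) G' : ℝ)) - 1|)
      (fun m hm => hconc K (by linarith) m hm ε hε0) (show 0 < δ / 4 by linarith)
    have herr : Tendsto (fun n => 10 * ((h n : ℝ) ^ 3 / (p n * Nn n) ^ 2)
        + (10 * K ^ 2 + 1) * (h n / (p n * Nn n))) atTop (nhds 0) := by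
      have := (hr.const_mul 10).add (hha.const_mul (10 * K ^ 2 + 1))
      simpa using this
    filter_upwards [huni, hcβ, hapos, hha.eventually_lt_const (show (0 : ℝ) < 1 / 4 by norm_num),
      hsqa.eventually_ge_atTop (8 * K), herr.eventually_lt_const (show 0 < c * η / 2 by positivity),
      (hclt K).eventually_const_lt hKtop, (hclt (-K)).eventually_lt_const hKbot]
      with n hu hcn han hhn hsn hen htop hbot
    rw [Real.dist_eq, sub_zero, abs_of_nonneg (PrGnp_nonneg (hp n) _)]
    have hβ0 : 0 < β n := hc.trans_le hcn
    have hs2 := Real.sq_sqrt (ha0 n)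
    have hs0 := Real.sqrt_nonneg (p n * (Nn n : ℝ))
    have hcover : PrGnp n (p n) (fun G =>
        ¬ (0 < countSub n (S n) G ∧ |Y n G - stdEdges n (p n) G| ≤ η)) ≤
        PrGnp n (p n) (fun G => (stdEdges n (p n) G ≤ -K ∨ ¬ stdEdges n (p n) G ≤ K) ∨
          (|(G.card : ℝ) - p n * Nn n| ≤ K * Real.sqrt (p n * Nn n) ∧
            ε < |(countSub n (S n) G : ℝ) /
              ExGnm n G.card (fun G' => (countSub n (S n) G' : ℝ)) - 1|)) := by
      refine PrGnp_mono (hp n) fun G hG hnot => ?_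
      by_contra hcon
      rw [not_or, not_or, not_le, not_not, not_and, not_lt] at hcon
      obtain ⟨⟨hT1, hT2⟩, hX⟩ := hcon
      have hW : |(G.card : ℝ) - p n * Nn n| ≤ K * Real.sqrt (p n * Nn n) := by
        have hq : 0 < 1 - p n := by linarith [(hp n).2]
        have hσpos : 0 < Real.sqrt (Nn n * (p n * (1 - p n))) := by
          refine Real.sqrt_pos.2 ?_
          rw [show (Nn n : ℝ) * (p n * (1 - p n)) = p n * Nn n * (1 - p n) by ring]
          positivity
        have hσle : Real.sqrt (Nn n * (p n * (1 - p n))) ≤ Real.sqrt (p n * Nn n) := by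
          refine Real.sqrt_le_sqrt ?_
          have := (hp n).1
          nlinarith
        have hT : |stdEdges n (p n) G| ≤ K := abs_le.2 ⟨hT1.le, hT2⟩
        rw [stdEdges, abs_div, abs_of_pos hσpos, div_le_iff₀ hσpos] at hT
        exact hT.trans (mul_le_mul_of_nonneg_left hσle (by linarith))
      have hmain := abs_log_count_sub_stdEdges_le (hp n) (hS n) hG (hβ n) hβ0 (hlam n) han
        (by rw [div_lt_iff₀ han] at hhn; linarith) (by nlinarith) hW (min_le_left _ _) (hX hW)
      refine hnot ⟨hmain.1, hmain.2.trans ?_⟩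
      rw [div_le_iff₀ hβ0]
      have h1 : ε ≤ c * η / 4 := min_le_right _ _
      have h2 : c * η ≤ η * β n := by nlinarith
      linarith
    refine hcover.trans_lt ?_
    have u1 := PrGnp_or_le (hp n)
      (fun G => stdEdges n (p n) G ≤ -K ∨ ¬ stdEdges n (p n) G ≤ K)
      (fun G => |(G.card : ℝ) - p n * Nn n| ≤ K * Real.sqrt (p n * Nn n) ∧
            ε < |(countSub n (S n) G : ℝ) /
              ExGnm n G.card (fun G' => (countSub n (S n) G' : ℝ)) - 1|)
    have u2 := PrGnp_or_le (hp n)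
      (fun G => stdEdges n (p n) G ≤ -K) (fun G => ¬ stdEdges n (p n) G ≤ K)
    rw [PrGnp_not] at u2
    have u3 := PrGnp_le_of_PrGnm_le (hp n) (show 0 ≤ δ / 4 by linarith)
      (fun m => |(m : ℝ) - p n * Nn n| ≤ K * Real.sqrt (p n * Nn n))
      (fun m G => ε < |(countSub n (S n) G : ℝ) /
              ExGnm n m (fun G' => (countSub n (S n) G' : ℝ)) - 1|) hu
    linarith
  constructor
  · have h1 := (hbad 1 one_pos).const_sub 1
    rw [sub_zero] at h1
    refine tendsto_of_tendsto_of_tendsto_of_le_of_le h1 tendsto_const_nhds (fun n => ?_) fun n => ?_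
    · change 1 - _ ≤ _
      rw [PrGnp_not, sub_sub_cancel]
      exact PrGnp_mono (hp n) fun G _ hG => hG.1
    · have := PrGnp_not n (p n) fun G => 0 < countSub n (S n) G
      have h2 := PrGnp_nonneg (hp n) fun G => ¬ 0 < countSub n (S n) G
      change PrGnp n (p n) _ ≤ 1
      linarith
  · intro x
    rw [Metric.tendsto_nhds]
    intro δ hδ
    obtain ⟨η, hη, hη1, hη2⟩ : ∃ η > 0, stdNormalCDF (x + η) < stdNormalCDF x + δ / 2 ∧
        stdNormalCDF x - δ / 2 < stdNormalCDF (x - η) := by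
      obtain ⟨η, hη, hball⟩ := Metric.continuousAt_iff.1
        (continuous_stdNormalCDF.continuousAt (x := x)) (δ / 2) (by linarith)
      have e1 := hball (x := x + η / 2) (by
        rw [Real.dist_eq, add_sub_cancel_left, abs_of_pos (by linarith)]; linarith)
      have e2 := hball (x := x - η / 2) (by
        rw [Real.dist_eq, sub_sub_cancel_left, abs_neg, abs_of_pos (by linarith)]; linarith)
      rw [Real.dist_eq, abs_lt] at e1 e2
      exact ⟨η / 2, by linarith, by linarith, by linarith⟩
    filter_upwards [(hbad η hη).eventually_lt_const (show 0 < δ / 2 by linarith),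
      (hclt (x + η)).eventually_lt_const hη1, (hclt (x - η)).eventually_const_lt hη2]
      with n hb h1 h2
    set B : Finset (Sym2 (Fin n)) → Prop := fun G =>
      ¬ (0 < countSub n (S n) G ∧ |Y n G - stdEdges n (p n) G| ≤ η) with hB
    have up : PrGnp n (p n) (fun G => 0 < countSub n (S n) G ∧ Y n G ≤ x) ≤
        PrGnp n (p n) (fun G => stdEdges n (p n) G ≤ x + η) + PrGnp n (p n) B := by
      refine le_trans (PrGnp_mono (hp n) fun G _ hG => ?_) (PrGnp_or_le (hp n) _ _)
      by_cases hBG : B G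
      · exact Or.inr hBG
      · have h3 := (abs_le.1 (not_not.1 hBG).2).1
        exact Or.inl (by linarith [hG.2])
    have lo : PrGnp n (p n) (fun G => stdEdges n (p n) G ≤ x - η) ≤
        PrGnp n (p n) (fun G => 0 < countSub n (S n) G ∧ Y n G ≤ x) + PrGnp n (p n) B := by
      refine le_trans (PrGnp_mono (hp n) fun G _ hG => ?_) (PrGnp_or_le (hp n) _ _)
      by_cases hBG : B G
      · exact Or.inr hBG
      · have h3 := not_not.1 hBG
        exact Or.inl ⟨h3.1, by linarith [(abs_le.1 h3.2).2]⟩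
    rw [Real.dist_eq, abs_lt]
    constructor <;> linarith
end
end

section
/- Let 0 < p = p(n) < 1 be a real and m = m(n) an integer satisfying m = p·2N and p >> n^{−1/2} (i.e. p√n → ∞). Let X_n denote the number of directed Hamilton cycles of the random digraph, μ_n = E_{D(n,m)}[X_n] and λ_n = E_{D(n,p)}[X_n]. Then X_n/μ_n → 1 in probability in D(n,m). If moreover limsup_{n→∞} p(n) < 1, then in D(n,p), ln(e^{β_n²/2} X_n/λ_n)/β_n converges in distribution to 𝒩(0,1), where β_n = √((1−p)/p). -/
/-!
Write `L = n (n - 1)` for the number of possible arcs and `X` for the number of directed Hamilton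
cycles.

**Concentration in `D(n,m)`** is a second moment argument. Contracting prescribed arcs one at a
time shows that at most `(n - 1 - k)!` Hamilton cycles contain `k` given arcs
(`card_cyclesExtending_le`), so the number of arcs that a random Hamilton cycle shares with a
fixed one has factorial moments close to those of a Poisson variable of mean `1`; expanding over
the common arcs bounds its exponential moments by `e^x (1 + O((x² + x)/n))` (`sum_pow_agree_le`).
Two arc-disjoint cycles are negatively correlated in `D(n,m)`, by a factor `exp (-(L - m)/m)`, and each common arc
multiplies the joint probability by at most `1 + x` with `x = (L - m)/(m - 2n)`. The two
exponentials cancel up to `1 + o(1)` when `m ≫ n^{3/2}` (`second_moment_le`), and Chebyshev's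
inequality gives `concentration`, uniformly in `m ≥ K n^{3/2}`.

**Log-normality in `D(n,p)`.** Conditionally on having `k` arcs, `D(n,p)` is `D(n,k)`, and the
number of arcs is binomial (`PrDnp_eq_sum`). For typical `k`, concentration replaces `X` by its
mean `μ_k = (n-1)! (k)_n/(L)_n` in `D(n,k)`. With `z` the standardisation of `k`, a Taylor
expansion gives `log (μ_k/λ) = β z - β²/2 + o(1)` where `λ = (n-1)! pⁿ` (`log_inclProb`,
`typical_arc_count`). Hence `log (e^{β²/2} X/λ)/β` is within `o(1)` of `z`, which is
asymptotically normal by the central limit theorem for a triangular array of binomial variables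
(`binomial_clt`, obtained from Lévy's continuity theorem). The condition `limsup p < 1` keeps `β`
away from `0`. The sandwich `mixture_sandwich` assembles these estimates.
-/

open Finset Filter MeasureTheory
open scoped Classical

noncomputable section

/-- The set of all `2N` possible directed edges (ordered pairs of distinct vertices). -/
def arcsAll (n : ℕ) : Finset (Fin n × Fin n) :=
  Finset.univ.filter fun a => a.1 ≠ a.2

/-- Probability of an event under the uniform random digraph `D(n,m)`
(uniform over all loopless digraphs on `[n]` with exactly `m` arcs). -/
def PrDnm (n m : ℕ) (A : Finset (Fin n × Fin n) → Prop) : ℝ :=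
  ((((arcsAll n).powersetCard m).filter A).card : ℝ) /
    (((arcsAll n).powersetCard m).card : ℝ)

/-- Probability of an event under the binomial random digraph `D(n,p)`. -/
def PrDnp (n : ℕ) (p : ℝ) (A : Finset (Fin n × Fin n) → Prop) : ℝ :=
  ∑ D ∈ (arcsAll n).powerset.filter A,
    p ^ D.card * (1 - p) ^ ((arcsAll n).card - D.card)

/-- Expectation of a real-valued digraph functional under `D(n,m)`. -/
def ExDnm (n m : ℕ) (X : Finset (Fin n × Fin n) → ℝ) : ℝ :=
  (∑ D ∈ (arcsAll n).powersetCard m, X D) /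
    (((arcsAll n).powersetCard m).card : ℝ)

/-- Expectation of a real-valued digraph functional under `D(n,p)`. -/
def ExDnp (n : ℕ) (p : ℝ) (X : Finset (Fin n × Fin n) → ℝ) : ℝ :=
  ∑ D ∈ (arcsAll n).powerset,
    p ^ D.card * (1 - p) ^ ((arcsAll n).card - D.card) * X D

/-- `X_n`: the number of members of the family `S` contained in the digraph `D`. -/
def countSubD (n : ℕ) (S : Finset (Finset (Fin n × Fin n))) (D : Finset (Fin n × Fin n)) : ℕ :=
  (S.filter fun H => H ⊆ D).card

/-- `f_j`: the number of ordered pairs `(H₁,H₂) ∈ S × S` with exactly `j` common arcs. -/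
def fjD (n : ℕ) (S : Finset (Finset (Fin n × Fin n))) (j : ℕ) : ℕ :=
  ((S ×ˢ S).filter fun P => (P.1 ∩ P.2).card = j).card

/-- `r_j = f_j / f_{j-1}`. -/
def rjD (n : ℕ) (S : Finset (Finset (Fin n × Fin n))) (j : ℕ) : ℝ :=
  (fjD n S j : ℝ) / (fjD n S (j - 1) : ℝ)

/-- The number of directed Hamilton cycles of the digraph `D`: cyclic permutations `σ` of
`[n]` all of whose arcs `(v, σ v)` belong to `D`. -/
def dirHamCount (n : ℕ) (D : Finset (Fin n × Fin n)) : ℕ :=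
  (Finset.univ.filter fun σ : Equiv.Perm (Fin n) =>
    σ.IsCycle ∧ σ.support = Finset.univ ∧ ∀ v : Fin n, (v, σ v) ∈ D).card

/-! ### Cyclic permutations with prescribed arcs -/

/-- The cyclic permutations of `[n]`, i.e. the directed Hamilton cycles of the complete digraph. -/
def hamPerms (n : ℕ) : Finset (Equiv.Perm (Fin n)) :=
  Finset.univ.filter fun σ => σ.IsCycle ∧ σ.support = Finset.univ

/-- The cycles with support exactly `T` that agree with `f` on `A`. -/
def cyclesExtending {n : ℕ} (T A : Finset (Fin n)) (f : Fin n → Fin n) :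
    Finset (Equiv.Perm (Fin n)) :=
  Finset.univ.filter fun σ => σ.IsCycle ∧ σ.support = T ∧ ∀ v ∈ A, σ v = f v

lemma card_hamPerms {n : ℕ} (hn : 2 ≤ n) : (hamPerms n).card = (n - 1).factorial := by
  have h := Equiv.Perm.card_of_cycleType_singleton (α := Fin n) (n := n) hn (by simp)
  simp only [Fintype.card_fin, Nat.choose_self, mul_one] at h
  rw [← h]
  congr 1
  ext σ
  simp only [hamPerms, mem_filter, mem_univ, true_and]
  constructor
  · rintro ⟨h1, h2⟩
    rw [h1.cycleType, h2]
    simp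
  · intro h3
    have hc : σ.IsCycle := by
      rw [← Equiv.Perm.card_cycleType_eq_one, h3]; simp
    refine ⟨hc, ?_⟩
    rw [hc.cycleType] at h3
    have : σ.support.card = n := by simpa using h3
    exact Finset.eq_univ_of_card _ (by simpa using this)

/-- Contracting the arc `a → f a` turns a cycle on `T` into a cycle on `T \ {a}`. -/
lemma card_cyclesExtending_contract {n : ℕ} (T A : Finset (Fin n)) (f : Fin n → Fin n)
    (hT : 3 ≤ T.card) (hA : A ⊆ T) (a : Fin n) (ha : a ∈ A) :
    (cyclesExtending T A f).card ≤ (cyclesExtending (T.erase a) (A.erase a)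
      (fun v => Equiv.swap a (f a) (f v))).card := by
  apply Finset.card_le_card_of_injOn (fun τ => Equiv.swap a (f a) * τ)
  · intro τ hτ
    simp only [cyclesExtending, coe_filter, mem_univ, true_and, Set.mem_ofPred_eq] at hτ ⊢
    obtain ⟨hc, hs, hf⟩ := hτ
    have hax : τ a ≠ a := by
      rw [← Equiv.Perm.mem_support, hs]; exact hA ha
    have haa : τ (τ a) ≠ a := by
      intro h
      have h2 := hc.eq_swap_of_apply_apply_eq_self hax h
      rw [h2, Equiv.Perm.support_swap hax.symm] at hs
      have := Finset.card_pair hax.symm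
      rw [hs] at this
      omega
    have hfa := hf a ha
    rw [← hfa]
    refine ⟨hc.swap_mul hax haa, ?_, ?_⟩
    · rw [Equiv.Perm.support_swap_mul_eq _ _ haa, hs, sdiff_singleton_eq_erase]
    · intro v hv
      rw [Equiv.Perm.mul_apply, hf v (mem_of_mem_erase hv)]
  · intro τ _ τ' _ h
    exact mul_left_cancel h

/-- At most `(|T| - 1 - |A|)!` cycles on `T` extend a prescription on `A ⊆ T`
(truncated subtraction covers `|A| = |T|`). -/
lemma card_cyclesExtending_le {n : ℕ} (t : ℕ) : ∀ (T A : Finset (Fin n)) (f : Fin n → Fin n),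
    T.card = t + 2 → A ⊆ T →
    (cyclesExtending T A f).card ≤ (t + 1 - A.card).factorial := by
  induction t with
  | zero =>
    intro T A f hT hA
    refine le_trans ?_ (Nat.factorial_pos _)
    rw [Finset.card_le_one]
    -- a cycle whose support has two points is the transposition of these points
    obtain ⟨x, y, hxy, rfl⟩ := Finset.card_eq_two.1 hT
    have key : ∀ τ ∈ cyclesExtending {x, y} A f, τ = Equiv.swap x y := by
      intro τ hτ
      simp only [cyclesExtending, mem_filter, mem_univ, true_and] at hτ
      obtain ⟨hc, hs, -⟩ := hτ
      have hx : τ x ≠ x := by rw [← Equiv.Perm.mem_support, hs]; simp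
      have h1 : τ x ∈ ({x, y} : Finset _) := by
        rw [← hs, Equiv.Perm.apply_mem_support, hs]; simp
      have hxy' : τ x = y := by simpa [hx] using h1
      have hy : τ y ≠ y := by rw [← Equiv.Perm.mem_support, hs]; simp
      have h2 : τ y ∈ ({x, y} : Finset _) := by
        rw [← hs, Equiv.Perm.apply_mem_support, hs]; simp
      have hyx : τ y = x := by simpa [hy] using h2
      have := hc.eq_swap_of_apply_apply_eq_self hx (by rw [hxy', hyx])
      rwa [hxy'] at this
    intro τ hτ τ' hτ'
    rw [key τ hτ, key τ' hτ']
  | succ t ih =>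
    have hne : ∀ (T A : Finset (Fin n)) (f : Fin n → Fin n),
        T.card = t + 1 + 2 → A ⊆ T → A.Nonempty →
        (cyclesExtending T A f).card ≤ (t + 1 + 1 - A.card).factorial := by
      rintro T A f hT hA ⟨a, ha⟩
      refine (card_cyclesExtending_contract T A f (by omega) hA a ha).trans ?_
      refine (ih _ _ _ ?_ (Finset.erase_subset_erase _ hA)).trans ?_
      · rw [Finset.card_erase_of_mem (hA ha)]; omega
      · rw [Finset.card_erase_of_mem ha]
        have := Finset.card_pos.2 ⟨a, ha⟩
        apply Nat.factorial_le; omega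
    intro T A f hT hA
    rcases A.eq_empty_or_nonempty with rfl | hA'
    · obtain ⟨a, ha⟩ : T.Nonempty := Finset.card_pos.1 (by omega)
      have hsub : cyclesExtending T ∅ f ⊆
          (T.erase a).biUnion fun b => cyclesExtending T {a} (fun _ => b) := by
        intro τ hτ
        simp only [cyclesExtending, mem_filter, mem_univ, true_and, mem_biUnion] at hτ ⊢
        obtain ⟨hc, hs, -⟩ := hτ
        refine ⟨τ a, ?_, hc, hs, by simp⟩
        rw [mem_erase]
        constructor
        · rw [← Equiv.Perm.mem_support, hs]; exact ha
        · rw [← hs, Equiv.Perm.apply_mem_support, hs]; exact ha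
      refine (card_le_card hsub).trans (card_biUnion_le.trans ?_)
      calc ∑ b ∈ T.erase a, (cyclesExtending T {a} (fun _ => b)).card
          ≤ ∑ b ∈ T.erase a, (t + 1).factorial := by
            apply Finset.sum_le_sum
            intro b _
            have := hne T {a} (fun _ => b) hT (by simpa using ha) (by simp)
            simpa using this
        _ = (t + 1 + 1 - (∅ : Finset (Fin n)).card).factorial := by
            rw [Finset.sum_const, card_erase_of_mem ha, hT]
            simp [Nat.factorial_succ]
    · exact hne T A f hT hA hA'

/-- The set of vertices with the same out-arc in `σ` and in `τ`. -/
def agree {n : ℕ} (σ τ : Equiv.Perm (Fin n)) : Finset (Fin n) :=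
  Finset.univ.filter fun v => τ v = σ v

lemma choose_mul_factorial_le {n k : ℕ} (hn : 2 ≤ n) (hk : k ≤ n) :
    ((n.choose k : ℝ)) * ((n - 1 - k).factorial : ℝ) ≤
      ((n - 1).factorial : ℝ) * ((1 / (k.factorial : ℝ)) * (1 + 2 * (k : ℝ) ^ 2 / n)) := by
  have hn0 : (0 : ℝ) < n := by positivity
  have hkf : (0 : ℝ) < k.factorial := by positivity
  have hnf : (n.factorial : ℝ) = n * (n - 1).factorial := by
    rw [← Nat.mul_factorial_pred (by omega : n ≠ 0)]; push_cast; ring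
  have hnf0 : (0 : ℝ) < (n - 1).factorial := by positivity
  rcases hk.lt_or_eq with hlt | rfl
  · have h1 : (n.choose k : ℝ) * k.factorial * (n - k).factorial = n.factorial := by
      exact_mod_cast Nat.choose_mul_factorial_mul_factorial hk
    have h2 : ((n - k).factorial : ℝ) = (n - k) * (n - 1 - k).factorial := by
      rw [← Nat.mul_factorial_pred (by omega : n - k ≠ 0),
        show n - k - 1 = n - 1 - k by omega]
      push_cast [Nat.cast_sub hk]; ring
    have hnk : (1 : ℝ) ≤ n - k := by
      have : ((k + 1 : ℕ) : ℝ) ≤ n := by exact_mod_cast hlt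
      push_cast at this; linarith
    have h3 : (n.choose k : ℝ) * ((n - 1 - k).factorial : ℝ) =
        (n - 1).factorial * ((1 / k.factorial) * (n / (n - k))) := by
      rw [h2, hnf] at h1
      have : (n : ℝ) - k ≠ 0 := by linarith
      field_simp
      linarith
    rw [h3]
    gcongr
    rw [div_le_iff₀ (by linarith)]
    -- the inequality `n ≤ 2 k (n - k)` for `1 ≤ k ≤ n - 1`
    have h4 : (k : ℝ) * n ≤ 2 * k ^ 2 * (n - k) := by
      rcases Nat.eq_zero_or_pos k with rfl | hkp
      · simp
      · have hk1 : (1 : ℝ) ≤ k := by exact_mod_cast hkp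
        have hn2 : (2 : ℝ) ≤ n := by exact_mod_cast hn
        have : (n : ℝ) ≤ 2 * k * (n - k) := by nlinarith
        nlinarith
    have h5 : (k : ℝ) ≤ 2 * k ^ 2 / n * (n - k) := by
      rw [div_mul_eq_mul_div, le_div_iff₀ hn0]; exact h4
    nlinarith
  · rw [Nat.choose_self, show k - 1 - k = 0 by omega, hnf]
    field_simp
    have : (2 : ℝ) ≤ k := by exact_mod_cast hn
    norm_num
    linarith

/-- Exponential moment of the number of common arcs, expanded over the common arcs. -/
lemma sum_pow_agree_le {n : ℕ} (hn : 2 ≤ n) (σ : Equiv.Perm (Fin n)) (x : ℝ) (hx : 0 ≤ x) :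
    ∑ τ ∈ hamPerms n, (1 + x) ^ (agree σ τ).card ≤
      (n - 1).factorial * (Real.exp x * (1 + 2 * (x ^ 2 + x) / n)) := by
  have h1 : ∀ τ : Equiv.Perm (Fin n), (1 + x) ^ (agree σ τ).card =
      ∑ A ∈ (univ : Finset (Fin n)).powerset, if A ⊆ agree σ τ then x ^ A.card else 0 := by
    intro τ
    rw [← Finset.sum_filter, add_comm, ← Finset.prod_const, Finset.prod_add_one]
    apply Finset.sum_congr
    · ext A; simp
    · intro A _; simp
  have h2 : ∑ τ ∈ hamPerms n, (1 + x) ^ (agree σ τ).card =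
      ∑ A ∈ (univ : Finset (Fin n)).powerset,
        ((cyclesExtending univ A σ).card : ℝ) * x ^ A.card := by
    simp_rw [h1]
    rw [Finset.sum_comm]
    refine Finset.sum_congr rfl fun A _ => ?_
    rw [← Finset.sum_filter, Finset.sum_const, nsmul_eq_mul]
    congr 3
    ext τ
    simp only [hamPerms, agree, cyclesExtending, mem_filter, mem_univ, true_and, subset_iff,
      and_assoc]
  have h3 : ∑ A ∈ (univ : Finset (Fin n)).powerset,
        ((cyclesExtending univ A σ).card : ℝ) * x ^ A.card ≤
      ∑ A ∈ (univ : Finset (Fin n)).powerset, ((n - 1 - A.card).factorial : ℝ) * x ^ A.card := by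
    refine Finset.sum_le_sum fun A _ => ?_
    gcongr
    have := card_cyclesExtending_le (n - 2) univ A σ (by simp; omega) (subset_univ _)
    rwa [show n - 2 + 1 = n - 1 by omega] at this
  have h4 : ∑ A ∈ (univ : Finset (Fin n)).powerset,
      ((n - 1 - A.card).factorial : ℝ) * x ^ A.card =
      ∑ k ∈ range (n + 1), (n.choose k : ℝ) * ((n - 1 - k).factorial * x ^ k) := by
    have := Finset.sum_powerset_apply_card
      (x := (univ : Finset (Fin n))) (fun k => ((n - 1 - k).factorial : ℝ) * x ^ k)
    simpa using this
  have h5 : ∑ k ∈ range (n + 1), (n.choose k : ℝ) * ((n - 1 - k).factorial * x ^ k) ≤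
      ∑ k ∈ range (n + 1), ((n - 1).factorial : ℝ) *
        (x ^ k / k.factorial * (1 + 2 * (k : ℝ) ^ 2 / n)) := by
    refine Finset.sum_le_sum fun k hk => ?_
    have := choose_mul_factorial_le hn (Nat.lt_succ_iff.1 (mem_range.1 hk))
    calc _ = (n.choose k : ℝ) * ((n - 1 - k).factorial : ℝ) * x ^ k := by ring
      _ ≤ _ := mul_le_mul_of_nonneg_right this (by positivity)
      _ = _ := by ring
  -- `∑ k² xᵏ/k! = (x² + x) eˣ`
  have h0 : HasSum (fun k : ℕ => x ^ k / (k.factorial : ℝ)) (Real.exp x) := by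
    rw [Real.exp_eq_exp_ℝ]; exact NormedSpace.expSeries_div_hasSum_exp x
  have hs1 : HasSum (fun k : ℕ => (k : ℝ) * (x ^ k / (k.factorial : ℝ))) (x * Real.exp x) := by
    rw [← hasSum_nat_add_iff' 1]
    simp only [range_one, sum_singleton, Nat.cast_zero, zero_mul, sub_zero]
    refine (h0.mul_left x).congr_fun ?_
    intro k
    rw [Nat.factorial_succ]; push_cast; field_simp; ring
  have hs2 : HasSum (fun k : ℕ => (k : ℝ) ^ 2 * (x ^ k / (k.factorial : ℝ)))
      ((x ^ 2 + x) * Real.exp x) := by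
    rw [← hasSum_nat_add_iff' 1]
    simp only [range_one, sum_singleton, Nat.cast_zero, zero_mul, sub_zero, ne_eq,
      OfNat.ofNat_ne_zero, not_false_eq_true, zero_pow]
    have := (hs1.add h0).mul_left x
    rw [show x * (x * Real.exp x + Real.exp x) = (x ^ 2 + x) * Real.exp x by ring] at this
    refine this.congr_fun ?_
    intro k
    rw [Nat.factorial_succ]; push_cast; field_simp; ring
  have h6 : HasSum (fun k : ℕ => x ^ k / (k.factorial : ℝ) * (1 + 2 * (k : ℝ) ^ 2 / n))
      (Real.exp x * (1 + 2 * (x ^ 2 + x) / n)) := by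
    have := h0.add (hs2.mul_left (2 / (n : ℝ)))
    rw [show Real.exp x + 2 / (n : ℝ) * ((x ^ 2 + x) * Real.exp x) =
      Real.exp x * (1 + 2 * (x ^ 2 + x) / n) by ring] at this
    refine this.congr_fun ?_
    intro k; ring
  rw [h2]
  refine h3.trans (h4.le.trans (h5.trans ?_))
  rw [← Finset.mul_sum]
  gcongr
  exact sum_le_hasSum _ (fun k _ => by positivity) h6

/-! ### The second moment in the uniform model -/

/-- The probability `(m)_u / (L)_u` that a uniform `m`-subset of an `L`-set contains
a given `u`-set, for `u ≤ m ≤ L`. -/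
def inclProb (L m u : ℕ) : ℝ := ∏ i ∈ range u, ((m : ℝ) - i) / ((L : ℝ) - i)

lemma choose_sub_eq (L m : ℕ) (hmL : m ≤ L) (u : ℕ) (hu : u ≤ m) :
    ((L - u).choose (m - u) : ℝ) = (L.choose m : ℝ) * inclProb L m u := by
  induction u with
  | zero => simp [inclProb]
  | succ u ih =>
    have ih := ih (by omega)
    rw [inclProb, prod_range_succ, ← mul_assoc, ← inclProb, ← ih]
    have h := Nat.add_one_mul_choose_eq (L - (u + 1)) (m - (u + 1))
    rw [show L - (u + 1) + 1 = L - u by omega, show m - (u + 1) + 1 = m - u by omega] at h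
    have h' : ((L : ℝ) - u) * ((L - (u + 1)).choose (m - (u + 1)) : ℝ) =
        ((L - u).choose (m - u) : ℝ) * ((m : ℝ) - u) := by
      rw [← Nat.cast_sub (by omega : u ≤ L), ← Nat.cast_sub (by omega : u ≤ m)]
      exact_mod_cast h
    have hL : (L : ℝ) - u ≠ 0 := by
      have : ((u + 1 : ℕ) : ℝ) ≤ L := by exact_mod_cast hu.trans hmL
      push_cast at this; linarith
    field_simp
    linarith

/-- The arc set of a permutation. -/
def arcsOf {n : ℕ} (σ : Equiv.Perm (Fin n)) : Finset (Fin n × Fin n) :=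
  univ.image fun v => (v, σ v)

lemma mem_arcsOf {n : ℕ} (σ : Equiv.Perm (Fin n)) (a : Fin n × Fin n) :
    a ∈ arcsOf σ ↔ σ a.1 = a.2 := by
  obtain ⟨a, b⟩ := a
  simp [arcsOf]

lemma card_arcsOf {n : ℕ} (σ : Equiv.Perm (Fin n)) : (arcsOf σ).card = n := by
  rw [arcsOf, card_image_of_injective]
  · simp
  · intro a b h; exact (Prod.ext_iff.1 h).1

lemma arcsOf_subset {n : ℕ} {σ : Equiv.Perm (Fin n)} (h : σ ∈ hamPerms n) :
    arcsOf σ ⊆ arcsAll n := by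
  intro a ha
  rw [mem_arcsOf] at ha
  simp only [hamPerms, mem_filter, mem_univ, true_and] at h
  simp only [arcsAll, mem_filter, mem_univ, true_and]
  have : a.1 ∈ σ.support := by rw [h.2]; simp
  rw [Equiv.Perm.mem_support, ha] at this
  exact this.symm

lemma card_agree_le {n : ℕ} (σ τ : Equiv.Perm (Fin n)) : (agree σ τ).card ≤ n := by
  simpa using card_le_univ (agree σ τ)

lemma card_arcsOf_union {n : ℕ} (σ τ : Equiv.Perm (Fin n)) :
    (arcsOf σ ∪ arcsOf τ).card = 2 * n - (agree σ τ).card := by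
  have h1 := card_union_add_card_inter (arcsOf σ) (arcsOf τ)
  have h2 : arcsOf σ ∩ arcsOf τ = (agree σ τ).image fun v => (v, σ v) := by
    ext ⟨a, b⟩
    simp only [mem_inter, mem_arcsOf, agree, mem_image, mem_filter, mem_univ, true_and,
      Prod.mk.injEq]
    constructor
    · rintro ⟨h, h'⟩; exact ⟨a, by rw [h, h'], rfl, h⟩
    · rintro ⟨c, h, rfl, rfl⟩; exact ⟨rfl, h⟩
  rw [h2, card_image_of_injective _ (fun a b h => (Prod.ext_iff.1 h).1), card_arcsOf,
    card_arcsOf] at h1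
  omega

lemma card_arcsAll (n : ℕ) : (arcsAll n).card = n * (n - 1) := by
  have : arcsAll n = (univ : Finset (Fin n)).offDiag := by
    ext a; simp [arcsAll, mem_offDiag]
  rw [this, offDiag_card]
  simp [Nat.mul_sub]

lemma dirHamCount_eq (n : ℕ) (D : Finset (Fin n × Fin n)) :
    (dirHamCount n D : ℝ) = ∑ σ ∈ hamPerms n, if arcsOf σ ⊆ D then 1 else 0 := by
  rw [Finset.sum_boole, dirHamCount]
  congr 2
  ext σ
  simp only [hamPerms, mem_filter, mem_univ, true_and, and_assoc, subset_iff, mem_arcsOf,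
    Prod.forall]
  constructor
  · rintro ⟨h1, h2, h3⟩; exact ⟨h1, h2, fun a b h => h ▸ h3 a⟩
  · rintro ⟨h1, h2, h3⟩; exact ⟨h1, h2, fun v => h3 v _ rfl⟩

lemma sum_subset_indicator {n m : ℕ} (hm : m ≤ (arcsAll n).card) (H : Finset (Fin n × Fin n))
    (hH : H ⊆ arcsAll n) (hHm : H.card ≤ m) :
    (∑ D ∈ (arcsAll n).powersetCard m, if H ⊆ D then (1 : ℝ) else 0) /
      (((arcsAll n).powersetCard m).card : ℝ) = inclProb (arcsAll n).card m H.card := by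
  have h := card_filter_powersetCard_subset H (arcsAll n) m hH hHm
  rw [Finset.sum_boole]
  rw [h, choose_sub_eq _ _ hm _ hHm, card_powersetCard]
  have : ((arcsAll n).card.choose m : ℝ) ≠ 0 := by
    exact_mod_cast (Nat.choose_pos hm).ne'
  field_simp

lemma ExDnm_dirHamCount {n m : ℕ} (hn : 2 ≤ n) (hm : m ≤ (arcsAll n).card) (hnm : n ≤ m) :
    ExDnm n m (fun D => (dirHamCount n D : ℝ)) =
      (n - 1).factorial * inclProb (arcsAll n).card m n := by
  simp only [ExDnm, dirHamCount_eq]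
  rw [Finset.sum_comm, Finset.sum_div]
  rw [← card_hamPerms hn, ← nsmul_eq_mul, ← Finset.sum_const]
  refine Finset.sum_congr rfl fun σ hσ => ?_
  rw [sum_subset_indicator hm _ (arcsOf_subset hσ) (by rwa [card_arcsOf]), card_arcsOf]

lemma ExDnm_dirHamCount_sq {n m : ℕ} (hm : m ≤ (arcsAll n).card) (hnm : 2 * n ≤ m) :
    ExDnm n m (fun D => (dirHamCount n D : ℝ) ^ 2) =
      ∑ σ ∈ hamPerms n, ∑ τ ∈ hamPerms n,
        inclProb (arcsAll n).card m (2 * n - (agree σ τ).card) := by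
  have h : ∀ D : Finset (Fin n × Fin n), (dirHamCount n D : ℝ) ^ 2 =
      ∑ σ ∈ hamPerms n, ∑ τ ∈ hamPerms n,
        if arcsOf σ ∪ arcsOf τ ⊆ D then (1 : ℝ) else 0 := by
    intro D
    rw [dirHamCount_eq, sq, Finset.sum_mul_sum]
    refine Finset.sum_congr rfl fun σ _ => Finset.sum_congr rfl fun τ _ => ?_
    simp only [union_subset_iff]
    split_ifs <;> simp_all
  simp only [ExDnm, h]
  rw [Finset.sum_comm, Finset.sum_div]
  refine Finset.sum_congr rfl fun σ hσ => ?_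
  rw [Finset.sum_comm, Finset.sum_div]
  refine Finset.sum_congr rfl fun τ hτ => ?_
  rw [sum_subset_indicator hm _ (union_subset (arcsOf_subset hσ) (arcsOf_subset hτ)),
    card_arcsOf_union]
  rw [card_arcsOf_union]; omega

lemma inclProb_pos {L m u : ℕ} (hm : m ≤ L) (hu : u ≤ m) : 0 < inclProb L m u := by
  apply Finset.prod_pos
  intro i hi
  have h1 : ((i + 1 : ℕ) : ℝ) ≤ m := by exact_mod_cast (mem_range.1 hi).trans_le hu
  have h2 : (m : ℝ) ≤ L := by exact_mod_cast hm
  push_cast at h1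
  apply div_pos <;> linarith

lemma inclProb_sub_le {L m n : ℕ} (hm : m ≤ L) (hn : 2 * n < m) (j : ℕ) (hj : j ≤ 2 * n) :
    inclProb L m (2 * n - j) ≤
      inclProb L m (2 * n) * (1 + ((L : ℝ) - m) / (m - 2 * n)) ^ j := by
  induction j with
  | zero => simp
  | succ j ih =>
    have ih := ih (by omega)
    have h2 : (m : ℝ) ≤ L := by exact_mod_cast hm
    have h3 : ((2 * n + 1 : ℕ) : ℝ) ≤ m := by exact_mod_cast hn
    push_cast at h3
    set u := 2 * n - (j + 1) with hu
    have hu1 : 2 * n - j = u + 1 := by omega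
    have huR : (u : ℝ) ≤ 2 * n := by
      have : u ≤ 2 * n := by omega
      exact_mod_cast this
    rw [hu1, inclProb, prod_range_succ, ← inclProb] at ih
    have hx : 1 + ((L : ℝ) - m) / (m - 2 * n) = (L - 2 * n) / (m - 2 * n) := by
      have : (m : ℝ) - 2 * n ≠ 0 := by linarith
      field_simp
      ring
    have hfac : 1 ≤ ((m : ℝ) - u) / (L - u) * (1 + ((L : ℝ) - m) / (m - 2 * n)) := by
      rw [hx, div_mul_div_comm, one_le_div (by apply mul_pos <;> linarith)]
      nlinarith
    have hx0 : 0 ≤ 1 + ((L : ℝ) - m) / (m - 2 * n) := by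
      rw [hx]; apply div_nonneg <;> linarith
    have hq := (inclProb_pos hm (by omega : u ≤ m)).le
    calc inclProb L m u ≤ inclProb L m u *
          (((m : ℝ) - u) / (L - u) * (1 + ((L : ℝ) - m) / (m - 2 * n))) :=
          le_mul_of_one_le_right hq hfac
      _ = inclProb L m u * (((m : ℝ) - u) / (L - u)) * (1 + ((L : ℝ) - m) / (m - 2 * n)) := by
          ring
      _ ≤ inclProb L m (2 * n) * (1 + ((L : ℝ) - m) / (m - 2 * n)) ^ j *
          (1 + ((L : ℝ) - m) / (m - 2 * n)) := mul_le_mul_of_nonneg_right ih hx0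
      _ = _ := by ring

/-- Negative correlation of two disjoint `n`-sets; the exponent uses `L = n (n - 1) ≤ n²`. -/
lemma inclProb_two_mul_le {m n : ℕ} (hm : m ≤ n * (n - 1)) (hn : 2 * n < m) :
    inclProb (n * (n - 1)) m (2 * n) ≤
      inclProb (n * (n - 1)) m n ^ 2 *
        Real.exp (-(((n * (n - 1) : ℕ) : ℝ) - m) / m) := by
  set L := n * (n - 1) with hL
  have h2 : (m : ℝ) ≤ L := by exact_mod_cast hm
  have h3 : ((2 * n + 1 : ℕ) : ℝ) ≤ m := by exact_mod_cast hn
  push_cast at h3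
  have hn0 : (0 : ℝ) ≤ n := by positivity
  have hLn : (L : ℝ) ≤ n * n := by
    have : L ≤ n * n := by rw [hL]; gcongr; omega
    exact_mod_cast this
  have hm0 : (0 : ℝ) < m := by linarith
  have hL0 : (0 : ℝ) < L := by linarith
  have key : ∀ i ∈ range n, ((m : ℝ) - (n + i : ℕ)) / ((L : ℝ) - (n + i : ℕ)) ≤
      ((m : ℝ) - i) / ((L : ℝ) - i) * Real.exp (-(n * ((L : ℝ) - m) / (L * m))) := by
    intro i hi
    have hi' : (i : ℝ) ≤ n := by exact_mod_cast (mem_range.1 hi).le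
    have hi0 : (0 : ℝ) ≤ i := by positivity
    push_cast
    have e1 : ((m : ℝ) - (n + i)) / ((L : ℝ) - (n + i)) =
        ((m : ℝ) - i) / ((L : ℝ) - i) *
          (1 - n * (L - m) / ((L - n - i) * (m - i))) := by
      have a1 : (L : ℝ) - (n + i) ≠ 0 := by linarith
      have a2 : (L : ℝ) - i ≠ 0 := by linarith
      have a3 : (m : ℝ) - i ≠ 0 := by linarith
      have a4 : (L : ℝ) - n - i ≠ 0 := by linarith
      field_simp
      ring
    rw [e1]
    apply mul_le_mul_of_nonneg_left
    · have e2 : (n : ℝ) * (L - m) / (L * m) ≤ n * (L - m) / ((L - n - i) * (m - i)) := by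
        apply div_le_div_of_nonneg_left
        · apply mul_nonneg hn0; linarith
        · apply mul_pos <;> linarith
        · apply mul_le_mul <;> linarith
      have := Real.add_one_le_exp (-((n : ℝ) * (L - m) / (L * m)))
      linarith
    · apply div_nonneg <;> linarith
  have h4 : inclProb L m (2 * n) = inclProb L m n *
      ∏ i ∈ range n, ((m : ℝ) - (n + i : ℕ)) / ((L : ℝ) - (n + i : ℕ)) := by
    rw [inclProb, two_mul, prod_range_add, inclProb]
  have h5 : ∏ i ∈ range n, ((m : ℝ) - (n + i : ℕ)) / ((L : ℝ) - (n + i : ℕ)) ≤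
      inclProb L m n * Real.exp (-(n * ((L : ℝ) - m) / (L * m))) ^ n := by
    refine (Finset.prod_le_prod ?_ key).trans_eq ?_
    · intro i hi
      have hi' : (i : ℝ) ≤ n := by exact_mod_cast (mem_range.1 hi).le
      push_cast
      apply div_nonneg <;> linarith
    · rw [prod_mul_distrib, prod_const, card_range, inclProb]
  have hq := (inclProb_pos hm (by omega : n ≤ m)).le
  have h6 : Real.exp (-(n * ((L : ℝ) - m) / (L * m))) ^ n ≤ Real.exp (-((L : ℝ) - m) / m) := by
    rw [← Real.exp_nat_mul]
    apply Real.exp_le_exp.2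
    rw [mul_neg, neg_div]
    apply neg_le_neg
    rw [← mul_div_assoc, div_le_div_iff₀ hm0 (by positivity)]
    have : 0 ≤ ((L : ℝ) - m) * m := mul_nonneg (by linarith) hm0.le
    nlinarith
  rw [h4]
  calc _ ≤ inclProb L m n * (inclProb L m n * Real.exp (-(n * ((L : ℝ) - m) / (L * m))) ^ n) :=
        mul_le_mul_of_nonneg_left h5 hq
    _ ≤ inclProb L m n * (inclProb L m n * Real.exp (-((L : ℝ) - m) / m)) := by gcongr
    _ = _ := by ring

/-- The second moment of the number of Hamilton cycles, up to an explicit error factor. -/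
lemma second_moment_le {n m : ℕ} (hn : 2 ≤ n) (hm : m ≤ n * (n - 1)) (hnm : 2 * n < m)
    (x : ℝ) (hx : x = (((n * (n - 1) : ℕ) : ℝ) - m) / (m - 2 * n)) :
    ExDnm n m (fun D => (dirHamCount n D : ℝ) ^ 2) ≤
      (ExDnm n m (fun D => (dirHamCount n D : ℝ))) ^ 2 *
        (Real.exp (x - (((n * (n - 1) : ℕ) : ℝ) - m) / m) * (1 + 2 * (x ^ 2 + x) / n)) := by
  have hm' : m ≤ (arcsAll n).card := by rwa [card_arcsAll]
  rw [ExDnm_dirHamCount_sq hm' (by omega), ExDnm_dirHamCount hn hm' (by omega), card_arcsAll]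
  set L := n * (n - 1) with hL
  have h2 : (m : ℝ) ≤ L := by exact_mod_cast hm
  have h3 : ((2 * n + 1 : ℕ) : ℝ) ≤ m := by exact_mod_cast hnm
  push_cast at h3
  have hx0 : 0 ≤ x := by rw [hx]; apply div_nonneg <;> linarith
  have hQ : 0 ≤ inclProb L m (2 * n) := (inclProb_pos hm (by omega)).le
  calc ∑ σ ∈ hamPerms n, ∑ τ ∈ hamPerms n, inclProb L m (2 * n - (agree σ τ).card)
      ≤ ∑ σ ∈ hamPerms n, ∑ τ ∈ hamPerms n,
          inclProb L m (2 * n) * (1 + x) ^ (agree σ τ).card := by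
        refine Finset.sum_le_sum fun σ _ => Finset.sum_le_sum fun τ _ => ?_
        rw [hx]
        exact inclProb_sub_le hm hnm _ ((card_agree_le σ τ).trans (by omega))
    _ ≤ ∑ σ ∈ hamPerms n, inclProb L m (2 * n) *
          ((n - 1).factorial * (Real.exp x * (1 + 2 * (x ^ 2 + x) / n))) := by
        refine Finset.sum_le_sum fun σ _ => ?_
        rw [← Finset.mul_sum]
        exact mul_le_mul_of_nonneg_left (sum_pow_agree_le hn σ x hx0) hQ
    _ = (n - 1).factorial * (inclProb L m (2 * n) *
          ((n - 1).factorial * (Real.exp x * (1 + 2 * (x ^ 2 + x) / n)))) := by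
        rw [Finset.sum_const, card_hamPerms hn, nsmul_eq_mul]
    _ ≤ (n - 1).factorial * ((inclProb L m n ^ 2 * Real.exp (-((L : ℝ) - m) / m)) *
          ((n - 1).factorial * (Real.exp x * (1 + 2 * (x ^ 2 + x) / n)))) := by
        have := inclProb_two_mul_le hm hnm
        gcongr
    _ = _ := by
        rw [sub_eq_add_neg x, Real.exp_add, neg_div]
        ring

/-- Chebyshev's inequality in `D(n,m)`. -/
lemma PrDnm_le {n m : ℕ} (hm : m ≤ (arcsAll n).card) (X : Finset (Fin n × Fin n) → ℝ)
    (μ R ε : ℝ) (hμ : ExDnm n m X = μ) (hμ0 : μ ≠ 0)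
    (hR : ExDnm n m (fun D => X D ^ 2) ≤ μ ^ 2 * R) (hε : 0 < ε) :
    PrDnm n m (fun D => ε < |X D / μ - 1|) ≤ (R - 1) / ε ^ 2 := by
  have hC : (0 : ℝ) < (((arcsAll n).powersetCard m).card : ℝ) := by
    rw [card_powersetCard]; exact_mod_cast Nat.choose_pos hm
  simp only [ExDnm] at hμ hR
  rw [PrDnm, div_le_div_iff₀ hC (by positivity)]
  rw [div_eq_iff hC.ne'] at hμ
  rw [div_le_iff₀ hC] at hR
  have h1 : ((((arcsAll n).powersetCard m).filter fun D => ε < |X D / μ - 1|).card : ℝ) * ε ^ 2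
      ≤ ∑ D ∈ (arcsAll n).powersetCard m, (X D / μ - 1) ^ 2 := by
    rw [← nsmul_eq_mul, ← Finset.sum_const]
    refine (Finset.sum_le_sum ?_).trans
      (Finset.sum_le_sum_of_subset_of_nonneg (filter_subset _ _) fun _ _ _ => sq_nonneg _)
    intro D hD
    have := (mem_filter.1 hD).2
    rw [← sq_abs (X D / μ - 1)]
    gcongr
  refine h1.trans ?_
  have h2 : ∑ D ∈ (arcsAll n).powersetCard m, (X D / μ - 1) ^ 2 =
      (∑ D ∈ (arcsAll n).powersetCard m, X D ^ 2) / μ ^ 2 -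
        2 * (∑ D ∈ (arcsAll n).powersetCard m, X D) / μ +
        (((arcsAll n).powersetCard m).card : ℝ) := by
    have : ∀ D, (X D / μ - 1) ^ 2 = X D ^ 2 / μ ^ 2 - 2 / μ * X D + 1 := by
      intro D; ring
    simp_rw [this]
    rw [sum_add_distrib, sum_sub_distrib, ← Finset.sum_div, ← Finset.mul_sum, sum_const,
      nsmul_eq_mul, mul_one]
    ring
  rw [h2, hμ]
  have h3 : (∑ D ∈ (arcsAll n).powersetCard m, X D ^ 2) / μ ^ 2 ≤
      R * (((arcsAll n).powersetCard m).card : ℝ) := by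
    rw [div_le_iff₀ (by positivity)]
    linarith
  have h4 : 2 * (μ * (((arcsAll n).powersetCard m).card : ℝ)) / μ =
      2 * (((arcsAll n).powersetCard m).card : ℝ) := by field_simp
  rw [h4]
  linarith

/-- Concentration in `D(n,m)`, uniformly in `m ≥ K n^{3/2}`. -/
lemma concentration (ε η : ℝ) (hε : 0 < ε) (hη : 0 < η) :
    ∃ K : ℝ, 4 ≤ K ∧ ∀ n m : ℕ, 2 ≤ n → m ≤ n * (n - 1) → K * (n * Real.sqrt n) ≤ m →
      PrDnm n m (fun D => ε < |(dirHamCount n D : ℝ) /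
            ExDnm n m (fun D' => (dirHamCount n D' : ℝ)) - 1|) ≤ η := by
  have hlim : Tendsto (fun K : ℝ => (Real.exp (4 * (K⁻¹) ^ 2) *
      (1 + (8 * K⁻¹ ^ 2 + 4 * K⁻¹)) - 1) / ε ^ 2) atTop (nhds 0) := by
    have hc : Continuous (fun y : ℝ => (Real.exp (4 * y ^ 2) *
      (1 + (8 * y ^ 2 + 4 * y)) - 1) / ε ^ 2) := by fun_prop
    have := (hc.tendsto 0).comp tendsto_inv_atTop_zero
    simpa [Function.comp_def] using this
  obtain ⟨K, hK4, hK⟩ := ((eventually_ge_atTop (4 : ℝ)).and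
    (hlim.eventually_le_const hη)).exists
  refine ⟨K, hK4, fun n m hn hm hKm => ?_⟩
  have hn2 : (2 : ℝ) ≤ n := by exact_mod_cast hn
  have hs1 : 1 ≤ Real.sqrt n := by rw [Real.one_le_sqrt]; linarith
  have hss : Real.sqrt n * Real.sqrt n = n := Real.mul_self_sqrt (by linarith)
  set s := Real.sqrt n with hs
  have hm4 : 4 * (n : ℝ) ≤ m := by
    refine le_trans ?_ hKm
    have : (n : ℝ) ≤ n * s := by nlinarith
    nlinarith
  have hnm : 2 * n < m := by
    have : ((2 * n : ℕ) : ℝ) < m := by push_cast; linarith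
    exact_mod_cast this
  have hm' : m ≤ (arcsAll n).card := by rwa [card_arcsAll]
  set L := n * (n - 1) with hL
  have hLm : (m : ℝ) ≤ L := by exact_mod_cast hm
  have hLn : (L : ℝ) ≤ n * n := by
    have : L ≤ n * n := by rw [hL]; gcongr; omega
    exact_mod_cast this
  set x : ℝ := ((L : ℝ) - m) / (m - 2 * n) with hx
  have hmn : (m : ℝ) / 2 ≤ m - 2 * n := by linarith
  have hm0 : (0 : ℝ) < m := by linarith
  have hK0 : 0 < K := by linarith
  have hx0 : 0 ≤ x := by apply div_nonneg <;> linarith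
  -- `x ≤ 2 √n / K`
  have hx1 : x ≤ 2 * s * K⁻¹ := by
    rw [hx, div_le_iff₀ (by linarith)]
    calc (L : ℝ) - m ≤ n * n := by linarith
      _ = 2 * s * K⁻¹ * (K * (n * s) / 2) := by field_simp; nlinarith
      _ ≤ 2 * s * K⁻¹ * (m - 2 * n) := by gcongr; linarith
  have hpos : 0 < ExDnm n m (fun D' => (dirHamCount n D' : ℝ)) := by
    rw [ExDnm_dirHamCount hn hm' (by omega), card_arcsAll]
    exact mul_pos (by positivity) (inclProb_pos hm (by omega))
  refine (PrDnm_le hm' _ _ _ ε rfl hpos.ne' (second_moment_le hn hm hnm x hx) hε).trans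
    (le_trans ?_ hK)
  have e1 : x - ((L : ℝ) - m) / m ≤ 4 * (K⁻¹) ^ 2 := by
    have e : x - ((L : ℝ) - m) / m = x * (2 * n / m) := by
      rw [hx]
      have a1 : (m : ℝ) - 2 * n ≠ 0 := by linarith
      field_simp
      ring
    have e' : 2 * (n : ℝ) / m ≤ 2 * K⁻¹ / s := by
      rw [div_le_div_iff₀ hm0 (by linarith)]
      calc 2 * (n : ℝ) * s = 2 * K⁻¹ * (K * (n * s)) := by field_simp
        _ ≤ _ := by gcongr
    rw [e]
    calc x * (2 * n / m) ≤ (2 * s * K⁻¹) * (2 * K⁻¹ / s) := by gcongr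
      _ = _ := by field_simp; norm_num
  have e2 : 2 * (x ^ 2 + x) / n ≤ 8 * K⁻¹ ^ 2 + 4 * K⁻¹ := by
    rw [div_le_iff₀ (by linarith)]
    have : x ^ 2 ≤ (2 * s * K⁻¹) ^ 2 := by gcongr
    have hsn : s ≤ n := by nlinarith
    have hKi : 0 < K⁻¹ := by positivity
    calc 2 * (x ^ 2 + x) ≤ 2 * ((2 * s * K⁻¹) ^ 2 + 2 * s * K⁻¹) := by gcongr
      _ = 8 * K⁻¹ ^ 2 * (s * s) + 4 * K⁻¹ * s := by ring
      _ ≤ 8 * K⁻¹ ^ 2 * n + 4 * K⁻¹ * n := by rw [hss]; gcongr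
      _ = _ := by ring
  have hnn : (0 : ℝ) < n := by linarith
  gcongr

/-! ### The central limit theorem for binomial variables -/

/-- The binomial weight `P(Bin(L,p) = k)`. -/
def binW (L : ℕ) (p : ℝ) (k : ℕ) : ℝ := (L.choose k : ℝ) * (p ^ k * (1 - p) ^ (L - k))

/-- The standardisation `(k - Lp)/√(Lp(1-p))`. -/
def zval (L : ℕ) (p : ℝ) (k : ℕ) : ℝ := (k - L * p) / Real.sqrt (L * p * (1 - p))

lemma binW_nonneg {L : ℕ} {p : ℝ} (h0 : 0 ≤ p) (h1 : p ≤ 1) (k : ℕ) : 0 ≤ binW L p k := by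
  have : 0 ≤ 1 - p := by linarith
  unfold binW; positivity

lemma sum_binW (L : ℕ) (p : ℝ) : ∑ k ∈ range (L + 1), binW L p k = 1 := by
  have h := add_pow p (1 - p) L
  rw [add_sub_cancel, one_pow] at h
  rw [h]
  refine Finset.sum_congr rfl fun k _ => ?_
  unfold binW; ring

/-- The law of the standardised binomial variable. -/
def binMeasure (L : ℕ) (p : ℝ) : Measure ℝ :=
  ∑ k ∈ range (L + 1), ENNReal.ofReal (binW L p k) • Measure.dirac (zval L p k)

lemma isProb_binMeasure {L : ℕ} {p : ℝ} (h0 : 0 ≤ p) (h1 : p ≤ 1) :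
    IsProbabilityMeasure (binMeasure L p) := by
  constructor
  simp only [binMeasure, Measure.coe_finsetSum, Finset.sum_apply, Measure.smul_apply,
    measure_univ, smul_eq_mul, mul_one]
  rw [← ENNReal.ofReal_sum_of_nonneg (fun k _ => binW_nonneg h0 h1 k), sum_binW]
  simp

lemma binMeasure_real_Iic {L : ℕ} {p : ℝ} (h0 : 0 ≤ p) (h1 : p ≤ 1) (x : ℝ) :
    (binMeasure L p).real (Set.Iic x) =
      ∑ k ∈ (range (L + 1)).filter (fun k => zval L p k ≤ x), binW L p k := by
  rw [Measure.real]
  simp only [binMeasure, Measure.coe_finsetSum, Finset.sum_apply, Measure.smul_apply,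
    smul_eq_mul]
  rw [ENNReal.toReal_sum, Finset.sum_filter]
  · refine Finset.sum_congr rfl fun k _ => ?_
    rw [Measure.dirac_apply' _ measurableSet_Iic, ENNReal.toReal_mul,
      ENNReal.toReal_ofReal (binW_nonneg h0 h1 k)]
    by_cases h : zval L p k ≤ x <;> simp [Set.indicator, h]
  · intro k _
    exact ENNReal.mul_ne_top ENNReal.ofReal_ne_top (measure_ne_top _ _)

lemma charFun_binMeasure {L : ℕ} {p : ℝ} (h0 : 0 ≤ p) (h1 : p ≤ 1) (t : ℝ) (θ : ℝ)
    (hθ : θ = t / Real.sqrt (L * p * (1 - p))) :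
    charFun (binMeasure L p) t =
      ((p : ℂ) * Complex.exp ((θ * (1 - p) : ℝ) * Complex.I) +
        (1 - p : ℝ) * Complex.exp ((-(θ * p) : ℝ) * Complex.I)) ^ L := by
  rw [charFun_apply_real, binMeasure, integral_finsetSum_measure, add_pow]
  · refine Finset.sum_congr rfl fun k hk => ?_
    rw [integral_smul_measure, integral_dirac, ENNReal.toReal_ofReal (binW_nonneg h0 h1 k)]
    have hk' : k ≤ L := Nat.lt_succ_iff.1 (mem_range.1 hk)
    rw [mul_pow, mul_pow, ← Complex.exp_nat_mul, ← Complex.exp_nat_mul]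
    have e : Complex.exp (t * zval L p k * Complex.I) =
        Complex.exp (k * ((θ * (1 - p) : ℝ) * Complex.I)) *
          Complex.exp ((L - k : ℕ) * ((-(θ * p) : ℝ) * Complex.I)) := by
      rw [← Complex.exp_add]
      congr 1
      have : t * zval L p k = k * (θ * (1 - p)) + (L - k : ℕ) * (-(θ * p)) := by
        rw [zval, hθ, Nat.cast_sub hk']; ring
      rw [← Complex.ofReal_mul, this]
      push_cast
      ring
    rw [e, binW, Complex.real_smul]
    push_cast
    ring
  · intro k _
    apply Integrable.smul_measure _ ENNReal.ofReal_ne_top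
    apply integrable_dirac
    simp

lemma exp_taylor_two (y : ℝ) (hy : |y| ≤ 1) :
    ‖Complex.exp (y * Complex.I) - (1 + y * Complex.I - y ^ 2 / 2)‖ ≤ |y| ^ 3 := by
  have hn : ‖(y : ℂ) * Complex.I‖ = |y| := by simp
  have h := Complex.exp_bound (x := y * Complex.I) (by rw [hn]; exact hy) (n := 3) (by norm_num)
  rw [hn] at h
  have e : ∑ m ∈ range 3, ((y : ℂ) * Complex.I) ^ m / (m.factorial : ℂ) =
      1 + y * Complex.I - y ^ 2 / 2 := by
    simp [Finset.sum_range_succ, mul_pow]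
    ring
  rw [e] at h
  refine h.trans ?_
  have : (0 : ℝ) ≤ |y| ^ 3 := by positivity
  norm_num [Nat.factorial]
  linarith

/-- Second order expansion of the characteristic function of a centred Bernoulli variable. -/
lemma bernoulli_char_expand {p : ℝ} (h0 : 0 ≤ p) (h1 : p ≤ 1) (θ : ℝ) (hθ : |θ| ≤ 1) :
    ‖((p : ℂ) * Complex.exp ((θ * (1 - p) : ℝ) * Complex.I) +
        (1 - p : ℝ) * Complex.exp ((-(θ * p) : ℝ) * Complex.I)) -
      (1 - (p * (1 - p) * θ ^ 2 / 2 : ℝ))‖ ≤ p * (1 - p) * |θ| ^ 3 := by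
  have hq : 0 ≤ 1 - p := by linarith
  have a1 : |θ * (1 - p)| = |θ| * (1 - p) := by rw [abs_mul, abs_of_nonneg hq]
  have a2 : |-(θ * p)| = |θ| * p := by rw [abs_neg, abs_mul, abs_of_nonneg h0]
  have ht : 0 ≤ |θ| := abs_nonneg _
  have b1 := exp_taylor_two (θ * (1 - p)) (by rw [a1]; nlinarith)
  have b2 := exp_taylor_two (-(θ * p)) (by rw [a2]; nlinarith)
  rw [a1] at b1
  rw [a2] at b2
  have e : ((p : ℂ) * Complex.exp ((θ * (1 - p) : ℝ) * Complex.I) +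
        (1 - p : ℝ) * Complex.exp ((-(θ * p) : ℝ) * Complex.I)) -
      (1 - (p * (1 - p) * θ ^ 2 / 2 : ℝ)) =
      (p : ℂ) * (Complex.exp ((θ * (1 - p) : ℝ) * Complex.I) -
        (1 + (θ * (1 - p) : ℝ) * Complex.I - ((θ * (1 - p) : ℝ) : ℂ) ^ 2 / 2)) +
      (1 - p : ℝ) * (Complex.exp ((-(θ * p) : ℝ) * Complex.I) -
        (1 + (-(θ * p) : ℝ) * Complex.I - ((-(θ * p) : ℝ) : ℂ) ^ 2 / 2)) := by
    push_cast
    ring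
  rw [e]
  refine (norm_add_le _ _).trans ?_
  rw [norm_mul, norm_mul, Complex.norm_real, Complex.norm_real, Real.norm_of_nonneg h0,
    Real.norm_of_nonneg hq]
  calc _ ≤ p * (|θ| * (1 - p)) ^ 3 + (1 - p) * (|θ| * p) ^ 3 := by gcongr
    _ = p * (1 - p) * |θ| ^ 3 * ((1 - p) ^ 2 + p ^ 2) := by ring
    _ ≤ p * (1 - p) * |θ| ^ 3 * 1 := by gcongr; nlinarith
    _ = _ := by ring

/-- `(1 + g)^L → e^c` when `L → ∞` and `L g → c`, for an arbitrary sequence of exponents. -/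
lemma tendsto_one_add_pow {L : ℕ → ℕ} {g : ℕ → ℂ} {c : ℂ}
    (hL : Tendsto (fun n => (L n : ℝ)) atTop atTop)
    (hg : Tendsto (fun n => (L n : ℂ) * g n) atTop (nhds c)) :
    Tendsto (fun n => (1 + g n) ^ L n) atTop (nhds (Complex.exp c)) := by
  have hinv : Tendsto (fun n => ((L n : ℂ))⁻¹) atTop (nhds 0) := by
    have h := (Complex.continuous_ofReal.tendsto 0).comp (tendsto_inv_atTop_zero.comp hL)
    simpa [Function.comp_def] using h
  have hLpos : ∀ᶠ n in atTop, (0 : ℝ) < L n := hL.eventually_gt_atTop 0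
  have hg0 : Tendsto g atTop (nhds 0) := by
    have h := hinv.mul hg
    rw [zero_mul] at h
    refine h.congr' ?_
    filter_upwards [hLpos] with n hn
    have : (L n : ℂ) ≠ 0 := by exact_mod_cast hn.ne'
    field_simp
  have hsmall : ∀ᶠ n in atTop, ‖g n‖ ≤ 1 / 2 := by
    have := hg0.norm
    rw [norm_zero] at this
    exact this.eventually_le_const (by norm_num)
  have hlog : Tendsto (fun n => (L n : ℂ) * Complex.log (1 + g n)) atTop (nhds c) := by
    have hd : Tendsto (fun n => (L n : ℂ) * (Complex.log (1 + g n) - g n)) atTop (nhds 0) := by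
      apply squeeze_zero_norm' (a := fun n => ‖(L n : ℂ) * g n‖ * ‖g n‖)
      · filter_upwards [hsmall] with n hn
        rw [norm_mul, norm_mul, mul_assoc]
        gcongr
        refine (Complex.norm_log_one_add_sub_self_le (by linarith)).trans ?_
        have h2 : (1 - ‖g n‖)⁻¹ ≤ 2 := by
          rw [inv_le_comm₀ (by linarith) (by norm_num)]; linarith
        have h3 : 0 ≤ ‖g n‖ ^ 2 := by positivity
        nlinarith
      · have := hg.norm.mul hg0.norm
        simpa using this
    have := hd.add hg
    rw [zero_add] at this
    refine this.congr fun n => ?_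
    ring
  refine ((Complex.continuous_exp.tendsto c).comp hlog).congr' ?_
  filter_upwards [hsmall] with n hn
  have hne : 1 + g n ≠ 0 := by
    intro h
    have : g n = -1 := by linear_combination h
    rw [this] at hn
    norm_num at hn
  simp only [Function.comp]
  rw [Complex.exp_nat_mul, Complex.exp_log hne]

/-- De Moivre–Laplace for a triangular array: `Bin(Lₙ,pₙ)` is asymptotically normal as soon as
its variance tends to infinity. -/
lemma binomial_clt (L : ℕ → ℕ) (p : ℕ → ℝ) (hp : ∀ n, 0 < p n ∧ p n < 1)
    (hs : Tendsto (fun n => (L n : ℝ) * p n * (1 - p n)) atTop atTop) (x : ℝ) :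
    Tendsto (fun n => ∑ k ∈ (range (L n + 1)).filter (fun k => zval (L n) (p n) k ≤ x),
      binW (L n) (p n) k) atTop (nhds (stdNormalCDF x)) := by
  have hprob : ∀ n, IsProbabilityMeasure (binMeasure (L n) (p n)) := fun n =>
    isProb_binMeasure (hp n).1.le (hp n).2.le
  let ν : ℕ → ProbabilityMeasure ℝ := fun n => ⟨binMeasure (L n) (p n), hprob n⟩
  let γ : ProbabilityMeasure ℝ := ⟨ProbabilityTheory.gaussianReal 0 1, inferInstance⟩
  have hL : Tendsto (fun n => (L n : ℝ)) atTop atTop := by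
    refine tendsto_atTop_mono (fun n => ?_) hs
    obtain ⟨h0, h1⟩ := hp n
    have : p n * (1 - p n) ≤ 1 := by nlinarith
    have hL0 : (0 : ℝ) ≤ L n := by positivity
    nlinarith
  have hchar : ∀ t : ℝ, Tendsto (fun n => charFun (ν n : Measure ℝ) t) atTop
      (nhds (charFun (γ : Measure ℝ) t)) := by
    intro t
    change Tendsto (fun n => charFun (binMeasure (L n) (p n)) t) atTop
      (nhds (charFun (ProbabilityTheory.gaussianReal 0 1) t))
    rw [ProbabilityTheory.charFun_gaussianReal]
    have e0 : (t : ℂ) * (0 : ℝ) * Complex.I - ((1 : NNReal) : ℝ) * (t : ℂ) ^ 2 / 2 =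
        -(t : ℂ) ^ 2 / 2 := by
      push_cast; ring
    rw [e0]
    set θ : ℕ → ℝ := fun n => t / Real.sqrt (L n * p n * (1 - p n)) with hθ
    have hsq : Tendsto (fun n => Real.sqrt (L n * p n * (1 - p n))) atTop atTop :=
      Real.tendsto_sqrt_atTop.comp hs
    have hθ0 : Tendsto θ atTop (nhds 0) := hsq.const_div_atTop t
    have hθ1 : ∀ᶠ n in atTop, |θ n| ≤ 1 := by
      have := hθ0.abs
      rw [abs_zero] at this
      exact this.eventually_le_const (by norm_num)
    have := tendsto_one_add_pow (L := L) (c := -(t : ℂ) ^ 2 / 2)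
      (g := fun n => ((p n : ℂ) * Complex.exp ((θ n * (1 - p n) : ℝ) * Complex.I) +
        (1 - p n : ℝ) * Complex.exp ((-(θ n * p n) : ℝ) * Complex.I)) - 1) hL ?_
    · refine this.congr fun n => ?_
      rw [charFun_binMeasure (hp n).1.le (hp n).2.le t (θ n) rfl]
      congr 1
      ring
    · rw [tendsto_iff_norm_sub_tendsto_zero]
      have hbd : Tendsto (fun n => t ^ 2 * |θ n|) atTop (nhds 0) := by
        have := hθ0.abs.const_mul (t ^ 2)
        simpa using this
      refine squeeze_zero' (Eventually.of_forall fun n => norm_nonneg _) ?_ hbd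
      filter_upwards [hθ1, hs.eventually_gt_atTop 0] with n hn hpos
      have hex := bernoulli_char_expand (hp n).1.le (hp n).2.le (θ n) hn
      have hv : (L n : ℝ) * p n * (1 - p n) * θ n ^ 2 = t ^ 2 := by
        simp only [hθ]
        rw [div_pow, Real.sq_sqrt hpos.le, mul_div_cancel₀ _ hpos.ne']
      have hvC : (L n : ℂ) * p n * (1 - p n) * (θ n : ℂ) ^ 2 = (t : ℂ) ^ 2 := by
        rw [← Complex.ofReal_pow t, ← hv]; push_cast; ring
      set a : ℂ := (p n : ℂ) * Complex.exp ((θ n * (1 - p n) : ℝ) * Complex.I) +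
        (1 - p n : ℝ) * Complex.exp ((-(θ n * p n) : ℝ) * Complex.I) with ha
      have e1 : (L n : ℂ) * (a - 1) - -(t : ℂ) ^ 2 / 2 =
          (L n : ℂ) * (a - (1 - (p n * (1 - p n) * θ n ^ 2 / 2 : ℝ))) := by
        rw [← hvC]; push_cast; ring
      rw [e1, norm_mul, Complex.norm_natCast]
      calc (L n : ℝ) * _ ≤ L n * (p n * (1 - p n) * |θ n| ^ 3) := by gcongr
        _ = (L n * p n * (1 - p n) * |θ n| ^ 2) * |θ n| := by ring
        _ = t ^ 2 * |θ n| := by rw [sq_abs, hv]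
  have hweak : Tendsto ν atTop (nhds γ) := ProbabilityMeasure.tendsto_of_tendsto_charFun hchar
  have hfr : (γ : Measure ℝ) (frontier (Set.Iic x)) = 0 := by
    rw [frontier_Iic]
    have := ProbabilityTheory.nullSingletonClass_gaussianReal (μ := 0) (v := 1) one_ne_zero
    exact measure_singleton (μ := ProbabilityTheory.gaussianReal 0 1) x
  have := ProbabilityMeasure.tendsto_measure_of_null_frontier_of_tendsto' hweak hfr
  have h2 := (ENNReal.tendsto_toReal (measure_ne_top (γ : Measure ℝ) (Set.Iic x))).comp this
  rw [stdNormalCDF_eq_cdf, ProbabilityTheory.cdf_eq_real]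
  refine h2.congr fun n => ?_
  exact binMeasure_real_Iic (hp n).1.le (hp n).2.le x

/-! ### The binomial model as a mixture, and the expected counts -/

lemma PrDnm_nonneg (n m : ℕ) (A : Finset (Fin n × Fin n) → Prop) : 0 ≤ PrDnm n m A := by
  unfold PrDnm; positivity

lemma PrDnm_le_one (n m : ℕ) (A : Finset (Fin n × Fin n) → Prop) : PrDnm n m A ≤ 1 := by
  unfold PrDnm
  apply div_le_one_of_le₀ _ (by positivity)
  exact_mod_cast card_filter_le _ _

lemma PrDnm_mono {n m : ℕ} {A B : Finset (Fin n × Fin n) → Prop} (h : ∀ D, A D → B D) :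
    PrDnm n m A ≤ PrDnm n m B := by
  unfold PrDnm
  gcongr
  exact h _

lemma one_le_PrDnm_add {n m : ℕ} (hm : m ≤ (arcsAll n).card)
    {A B : Finset (Fin n × Fin n) → Prop} (h : ∀ D, A D ∨ B D) :
    1 ≤ PrDnm n m A + PrDnm n m B := by
  have hC : (0 : ℝ) < (((arcsAll n).powersetCard m).card : ℝ) := by
    rw [card_powersetCard]; exact_mod_cast Nat.choose_pos hm
  unfold PrDnm
  rw [← add_div, one_le_div hC]
  have : (arcsAll n).powersetCard m ⊆ ((arcsAll n).powersetCard m).filter A ∪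
      ((arcsAll n).powersetCard m).filter B := by
    intro D hD
    rcases h D with h | h
    · exact mem_union_left _ (mem_filter.2 ⟨hD, h⟩)
    · exact mem_union_right _ (mem_filter.2 ⟨hD, h⟩)
  have h2 := (card_le_card this).trans (card_union_le _ _)
  exact_mod_cast h2

/-- `D(n,p)` is the mixture of the `D(n,k)` over a binomial number `k` of arcs. -/
lemma PrDnp_eq_sum (n : ℕ) (p : ℝ) (A : Finset (Fin n × Fin n) → Prop) :
    PrDnp n p A = ∑ k ∈ range ((arcsAll n).card + 1),
      binW (arcsAll n).card p k * PrDnm n k A := by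
  rw [PrDnp, Finset.sum_filter, Finset.sum_powerset]
  refine Finset.sum_congr rfl fun k hk => ?_
  have hk' : k ≤ (arcsAll n).card := Nat.lt_succ_iff.1 (mem_range.1 hk)
  have h1 : ∑ D ∈ (arcsAll n).powersetCard k,
      (if A D then p ^ D.card * (1 - p) ^ ((arcsAll n).card - D.card) else 0) =
      ∑ D ∈ (arcsAll n).powersetCard k,
        if A D then p ^ k * (1 - p) ^ ((arcsAll n).card - k) else 0 := by
    refine Finset.sum_congr rfl fun D hD => ?_
    rw [(mem_powersetCard.1 hD).2]
  rw [h1, ← Finset.sum_filter, Finset.sum_const, nsmul_eq_mul, PrDnm, binW, card_powersetCard]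
  have : ((arcsAll n).card.choose k : ℝ) ≠ 0 := by
    exact_mod_cast (Nat.choose_pos hk').ne'
  field_simp

lemma sum_superset_weight {α : Type*} [DecidableEq α] (E H : Finset α) (hH : H ⊆ E) (p : ℝ) :
    ∑ D ∈ E.powerset, p ^ D.card * (1 - p) ^ (E.card - D.card) * (if H ⊆ D then 1 else 0) =
      p ^ H.card := by
  have h := Finset.prod_add (fun _ : α => p) (fun e => if e ∈ H then 0 else 1 - p) E
  have hl : ∏ e ∈ E, (p + if e ∈ H then 0 else 1 - p) = p ^ H.card := by
    have : ∀ e ∈ E, (p + if e ∈ H then 0 else 1 - p) = if e ∈ H then p else 1 := by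
      intro e _; split_ifs <;> ring
    rw [Finset.prod_congr rfl this, Finset.prod_ite_mem, inter_eq_right.2 hH, prod_const]
  rw [← hl, h]
  refine Finset.sum_congr rfl fun D hD => ?_
  have hD' := mem_powerset.1 hD
  rw [prod_const, mul_assoc]
  congr 1
  by_cases hs : H ⊆ D
  · rw [if_pos hs, mul_one, ← card_sdiff_of_subset hD', ← prod_const]
    refine Finset.prod_congr rfl fun e he => ?_
    rw [if_neg fun h => (mem_sdiff.1 he).2 (hs h)]
  · rw [if_neg hs, mul_zero]
    obtain ⟨e, he, heD⟩ := not_subset.1 hs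
    symm
    apply Finset.prod_eq_zero (mem_sdiff.2 ⟨hH he, heD⟩)
    rw [if_pos he]

lemma ExDnp_dirHamCount {n : ℕ} (hn : 2 ≤ n) (p : ℝ) :
    ExDnp n p (fun D => (dirHamCount n D : ℝ)) = (n - 1).factorial * p ^ n := by
  simp only [ExDnp, dirHamCount_eq, Finset.mul_sum]
  rw [Finset.sum_comm, ← card_hamPerms hn, ← nsmul_eq_mul, ← Finset.sum_const]
  refine Finset.sum_congr rfl fun σ hσ => ?_
  have := sum_superset_weight _ _ (arcsOf_subset hσ) p
  rw [card_arcsOf] at this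
  exact this

/-- First order expansion of `log ((k)_n / ((L)_n pⁿ))` at `k = p L (1 + d)`, where
`L = n (n - 1)`; the term `-(1 - p)/(2p)` comes from `∑_{i<n} i = L/2`. -/
lemma log_inclProb {n k : ℕ} {p d w : ℝ} (hn : 2 ≤ n) (hp0 : 0 < p) (hp1 : p < 1)
    (hk : (k : ℝ) = p * (n * (n - 1) : ℕ) * (1 + d))
    (hw : w = |d| + 1 / (p * (n - 1))) (hw2 : w ≤ 1 / 2) :
    |Real.log (inclProb (n * (n - 1)) k n / p ^ n) - (n * d - (1 - p) / p / 2)| ≤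
      4 * n * w ^ 2 := by
  have hn2 : (2 : ℝ) ≤ n := by exact_mod_cast hn
  have hLc : ((n * (n - 1) : ℕ) : ℝ) = n * (n - 1) := by
    rw [Nat.cast_mul, Nat.cast_sub (by omega)]; simp
  set L := n * (n - 1) with hL
  have hL0 : (0 : ℝ) < L := by rw [hLc]; apply mul_pos <;> linarith
  have hpL : 0 < p * L := mul_pos hp0 hL0
  have hratio : ∀ i ∈ range n, (i : ℝ) / (p * L) ≤ 1 / (p * (n - 1)) := by
    intro i hi
    have hi' : (i : ℝ) ≤ n := by exact_mod_cast (mem_range.1 hi).le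
    rw [div_le_div_iff₀ hpL (mul_pos hp0 (by linarith)), hLc]
    have : 0 ≤ p * ((n : ℝ) - 1) := mul_nonneg hp0.le (by linarith)
    nlinarith
  have hu : ∀ i ∈ range n, |d - i / (p * L)| ≤ w := by
    intro i hi
    have h0 : 0 ≤ (i : ℝ) / (p * L) := by positivity
    calc |d - i / (p * L)| ≤ |d| + |(i : ℝ) / (p * L)| := abs_sub _ _
      _ ≤ w := by rw [abs_of_nonneg h0, hw]; linarith [hratio i hi]
  have hv : ∀ i ∈ range n, |-((i : ℝ) / L)| ≤ w := by
    intro i hi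
    have h0 : 0 ≤ (i : ℝ) / L := by positivity
    rw [abs_neg, abs_of_nonneg h0, hw]
    have h1 : (i : ℝ) / L ≤ i / (p * L) := by
      apply div_le_div_of_nonneg_left (by positivity) hpL
      nlinarith
    linarith [hratio i hi, abs_nonneg d]
  have hfac : ∀ i ∈ range n, ((k : ℝ) - i) / ((L : ℝ) - i) / p =
      (1 + (d - i / (p * L))) / (1 + -((i : ℝ) / L)) := by
    intro i hi
    have hv1 := (abs_le.1 (hv i hi)).1
    have h1 : 1 + -((i : ℝ) / L) ≠ 0 := by linarith
    have h2 : (L : ℝ) - i ≠ 0 := by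
      have : (L : ℝ) - i = L * (1 + -((i : ℝ) / L)) := by field_simp; ring
      rw [this]; exact mul_ne_zero hL0.ne' h1
    have e1 : (k : ℝ) - i = p * L * (1 + (d - i / (p * L))) := by
      rw [hk]; field_simp; ring
    have e2 : (L : ℝ) - i = L * (1 + -((i : ℝ) / L)) := by field_simp; ring
    rw [e1, e2]
    field_simp
  have hprod : inclProb L k n / p ^ n =
      ∏ i ∈ range n, (1 + (d - i / (p * L))) / (1 + -((i : ℝ) / L)) := by
    rw [inclProb, ← Finset.prod_congr rfl hfac, Finset.prod_div_distrib]
    simp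
  have hupos : ∀ i ∈ range n, 0 < 1 + (d - i / (p * L)) := fun i hi => by
    linarith [(abs_le.1 (hu i hi)).1]
  have hvpos : ∀ i ∈ range n, 0 < 1 + -((i : ℝ) / L) := fun i hi => by
    linarith [(abs_le.1 (hv i hi)).1]
  have hlog : Real.log (inclProb L k n / p ^ n) = ∑ i ∈ range n,
      (Real.log (1 + (d - i / (p * L))) - Real.log (1 + -((i : ℝ) / L))) := by
    rw [hprod, Real.log_prod]
    · refine Finset.sum_congr rfl fun i hi => ?_
      rw [Real.log_div (hupos i hi).ne' (hvpos i hi).ne']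
    · intro i hi
      exact (div_pos (hupos i hi) (hvpos i hi)).ne'
  have hsumi : ∑ i ∈ range n, (i : ℝ) = L / 2 := by
    have := Finset.sum_range_id_mul_two n
    have h' : ((∑ i ∈ range n, i : ℕ) : ℝ) * 2 = L := by
      rw [hL]; exact_mod_cast this
    push_cast at h'
    linarith
  have hmain : n * d - (1 - p) / p / 2 =
      ∑ i ∈ range n, ((d - i / (p * L)) - -((i : ℝ) / L)) := by
    rw [Finset.sum_sub_distrib, Finset.sum_sub_distrib, Finset.sum_neg_distrib,
      ← Finset.sum_div, ← Finset.sum_div, hsumi, sum_const, card_range, nsmul_eq_mul]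
    field_simp
    ring
  rw [hlog, hmain, ← Finset.sum_sub_distrib]
  refine (Finset.abs_sum_le_sum_abs _ _).trans ?_
  have : ∀ i ∈ range n, |(Real.log (1 + (d - i / (p * L))) - Real.log (1 + -((i : ℝ) / L))) -
      ((d - i / (p * L)) - -((i : ℝ) / L))| ≤ 4 * w ^ 2 := by
    intro i hi
    have a := abs_log_one_add_sub_le ((hu i hi).trans hw2)
    have b := abs_log_one_add_sub_le ((hv i hi).trans hw2)
    have a2 : (d - i / (p * L)) ^ 2 ≤ w ^ 2 := sq_le_sq' (by linarith [(abs_le.1 (hu i hi)).1])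
      (abs_le.1 (hu i hi)).2
    have b2 : (-((i : ℝ) / L)) ^ 2 ≤ w ^ 2 := sq_le_sq' (by linarith [(abs_le.1 (hv i hi)).1])
      (abs_le.1 (hv i hi)).2
    rw [abs_le] at a b ⊢
    constructor <;> linarith [a.1, a.2, b.1, b.2]
  refine (Finset.sum_le_sum this).trans_eq ?_
  rw [sum_const, card_range, nsmul_eq_mul]
  ring

/-! ### Concentration and asymptotic normality -/

set_option maxHeartbeats 1000000 in
/-- For a number `k` of arcs within `T` standard deviations of its mean, `k` is at least half the
mean and `log (e^{β²/2} μ_k/λ)/β` is close to the standardisation `z` of `k`. -/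
lemma typical_arc_count {n k : ℕ} {p T β b : ℝ} (hn : 2 ≤ n) (hp0 : 0 < p) (hp1 : p < 1)
    (hβ : β = Real.sqrt ((1 - p) / p)) (hb : 0 < b) (hbβ : b ≤ β)
    (hz : |zval (n * (n - 1)) p k| ≤ T)
    (hsmall : (4 * T ^ 2 + 8) / (p ^ 2 * n) ≤ 1 / 4) :
    p * (n * (n - 1) : ℕ) / 2 ≤ k ∧
    |(Real.log (inclProb (n * (n - 1)) k n / p ^ n) + β ^ 2 / 2) / β -
      zval (n * (n - 1)) p k| ≤ T / (n - 1) + 4 * ((4 * T ^ 2 + 8) / (p ^ 2 * n)) / b := by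
  have hn2 : (2 : ℝ) ≤ n := by exact_mod_cast hn
  have hLc : ((n * (n - 1) : ℕ) : ℝ) = n * (n - 1) := by
    rw [Nat.cast_mul, Nat.cast_sub (by omega)]; simp
  set L := n * (n - 1) with hL
  set z := zval L p k with hzdef
  have hL0 : (0 : ℝ) < L := by rw [hLc]; apply mul_pos <;> linarith
  have hpL : 0 < p * L := mul_pos hp0 hL0
  have hq : 0 < 1 - p := by linarith
  have hβ0 : 0 < β := lt_of_lt_of_le hb hbβ
  have hβ2 : β ^ 2 = (1 - p) / p := by rw [hβ, Real.sq_sqrt (by positivity)]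
  have hsL0 : 0 < Real.sqrt L := Real.sqrt_pos.2 hL0
  have hsL : Real.sqrt L ^ 2 = L := Real.sq_sqrt hL0.le
  have hT0 : 0 ≤ T := (abs_nonneg _).trans hz
  have hsd : Real.sqrt (L * p * (1 - p)) = p * Real.sqrt L * β := by
    rw [Real.sqrt_eq_iff_mul_self_eq (by positivity) (by positivity)]
    have : p * Real.sqrt L * β * (p * Real.sqrt L * β) = p ^ 2 * Real.sqrt L ^ 2 * β ^ 2 := by
      ring
    rw [this, hsL, hβ2]
    field_simp
  set d : ℝ := z * β / Real.sqrt L with hd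
  have hk : (k : ℝ) = p * L * (1 + d) := by
    have hz' : z * (p * Real.sqrt L * β) = k - L * p := by
      rw [hzdef, zval, hsd]; field_simp
    have : p * L * d = k - L * p := by
      rw [← hz', hd, mul_div_assoc', div_eq_iff hsL0.ne']
      linear_combination (-(p * z * β)) * hsL
    linarith
  set w : ℝ := |d| + 1 / (p * (n - 1)) with hw
  have hd2 : d ^ 2 ≤ 2 * T ^ 2 / (p ^ 2 * n) / n := by
    have h1 : d ^ 2 = z ^ 2 * ((1 - p) / p) / L := by
      rw [hd, div_pow, mul_pow, hβ2, hsL]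
    have h2 : z ^ 2 ≤ T ^ 2 := by
      rw [← sq_abs z]; gcongr
    have h3 : (1 - p) / p ≤ 1 / p ^ 2 := by
      rw [div_le_div_iff₀ hp0 (by positivity)]; nlinarith
    have h4 : 1 / (L : ℝ) ≤ 2 / (n * n) := by
      rw [div_le_div_iff₀ hL0 (by positivity), hLc]; nlinarith
    rw [h1]
    calc z ^ 2 * ((1 - p) / p) / L = z ^ 2 * ((1 - p) / p) * (1 / L) := by ring
      _ ≤ T ^ 2 * (1 / p ^ 2) * (2 / (n * n)) := by gcongr
      _ = _ := by field_simp
  have hw2' : w ^ 2 ≤ (4 * T ^ 2 + 8 * (n / n)) / (p ^ 2 * n) / n := by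
    have h1 : (1 / (p * ((n : ℝ) - 1))) ^ 2 ≤ 4 / (p ^ 2 * n) / n := by
      rw [div_pow, one_pow, mul_pow, div_div, div_le_div_iff₀
        (by have : (0 : ℝ) < n - 1 := by linarith
            positivity) (by positivity)]
      have : (n : ℝ) * n ≤ 4 * (n - 1) ^ 2 := by nlinarith
      have hp2 : 0 < p ^ 2 := by positivity
      nlinarith
    have h2 : w ^ 2 ≤ 2 * (d ^ 2 + (1 / (p * ((n : ℝ) - 1))) ^ 2) := by
      rw [hw, ← sq_abs d]; exact add_sq_le
    refine h2.trans ?_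
    rw [div_self (by linarith)]
    calc _ ≤ 2 * (2 * T ^ 2 / (p ^ 2 * n) / n + 4 / (p ^ 2 * n) / n) := by gcongr
      _ = _ := by ring
  rw [div_self (by linarith), mul_one] at hw2'
  set C : ℝ := (4 * T ^ 2 + 8) / (p ^ 2 * n) with hC
  have hC0 : 0 < C := by positivity
  have hnw : n * w ^ 2 ≤ C := by
    rw [le_div_iff₀ (by linarith)] at hw2'; linarith
  have hw0 : 0 ≤ w := by
    have : (0 : ℝ) < n - 1 := by linarith
    positivity
  have hwhalf : w ≤ 1 / 2 := by
    have : w ^ 2 ≤ (1 / 2) ^ 2 := by nlinarith [sq_nonneg w]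
    exact abs_le_of_sq_le_sq' this (by norm_num) |>.2
  have hlog := log_inclProb hn hp0 hp1 hk rfl hwhalf
  have hdw : |d| ≤ 1 / 2 := by
    have h1 : 0 ≤ 1 / (p * ((n : ℝ) - 1)) := by
      have : (0 : ℝ) < n - 1 := by linarith
      positivity
    linarith
  constructor
  · rw [hk]
    have := mul_le_mul_of_nonneg_left
      (show (1 : ℝ) / 2 ≤ 1 + d by linarith [(abs_le.1 hdw).1]) hpL.le
    linarith
  · rw [← hβ2] at hlog
    set lg := Real.log (inclProb L k n / p ^ n) with hlg
    have hnd : n * d = z * β * (n / Real.sqrt L) := by rw [hd]; ring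
    have hr1 : 1 ≤ n / Real.sqrt L := by
      rw [one_le_div hsL0]
      apply Real.sqrt_le_iff.2 ⟨by linarith, _⟩
      rw [hLc]; nlinarith
    have hr2 : n / Real.sqrt L - 1 ≤ 1 / (n - 1) := by
      have h1 : (n : ℝ) - 1 ≤ Real.sqrt L := by
        apply Real.le_sqrt_of_sq_le
        rw [hLc]; nlinarith
      have h2 : (n : ℝ) / Real.sqrt L ≤ n / (n - 1) := by
        apply div_le_div_of_nonneg_left (by linarith) (by linarith) h1
      have h3 : (n : ℝ) / (n - 1) = 1 + 1 / (n - 1) := by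
        have : (n : ℝ) - 1 ≠ 0 := by linarith
        field_simp
        ring
      linarith
    have e : (lg + β ^ 2 / 2) / β - z =
        (lg - (n * d - β ^ 2 / 2)) / β + z * (n / Real.sqrt L - 1) := by
      rw [hnd]; field_simp; ring
    rw [e]
    refine (abs_add_le _ _).trans ?_
    rw [add_comm, abs_div, abs_mul, abs_of_pos hβ0, abs_of_nonneg (sub_nonneg.2 hr1)]
    apply add_le_add
    · calc |z| * (n / Real.sqrt L - 1) ≤ T * (1 / (n - 1)) := by gcongr
        _ = _ := by ring
    · calc |lg - (n * d - β ^ 2 / 2)| / β ≤ (4 * C) / b := by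
            gcongr
            calc _ ≤ _ := hlog
              _ ≤ _ := by nlinarith
        _ = _ := by ring

/-- On the event that `X` is within a factor `1 ± ε` of `μ`, the logarithm of `X` is within `2ε`
of that of `μ`. -/
lemma abs_log_le_of_ratio {X μ ε : ℝ} (hμ : 0 < μ) (hε : ε ≤ 1 / 2) (h : |X / μ - 1| ≤ ε) :
    0 < X ∧ |Real.log X - Real.log μ| ≤ 2 * ε := by
  obtain ⟨h1, h2⟩ := abs_le.1 h
  have hr : 0 < X / μ := by linarith
  have hX : 0 < X := by
    have := mul_pos hr hμ
    rwa [div_mul_cancel₀ _ hμ.ne'] at this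
  refine ⟨hX, ?_⟩
  rw [← Real.log_div hX.ne' hμ.ne']
  have a := Real.log_le_sub_one_of_pos hr
  have b := Real.one_sub_inv_le_log_of_pos hr
  have hε0 : 0 ≤ ε := by linarith
  have c : -(2 * ε) ≤ 1 - (X / μ)⁻¹ := by
    have e : 1 - (X / μ)⁻¹ = (X / μ - 1) / (X / μ) := by field_simp
    rw [e, le_div_iff₀ hr]
    nlinarith
  rw [abs_le]
  constructor <;> linarith

/-- Given a typical number `k` of arcs, the normalised logarithm of the count lies on the same
side of `x` as the standardisation of `k`, up to `δ` and with probability at least `1 - η`. -/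
lemma conditional_prob (p β : ℕ → ℝ) (hp : ∀ n : ℕ, 0 < p n ∧ p n < 1)
    (hpn : Tendsto (fun n : ℕ => p n * Real.sqrt n) atTop atTop)
    (hβ : ∀ n : ℕ, β n = Real.sqrt ((1 - p n) / p n))
    (c : ℝ) (hc : c < 1) (hpc : ∀ᶠ n : ℕ in atTop, p n ≤ c) (x T δ η : ℝ) (hδ : 0 < δ)
    (hη : 0 < η) :
    ∀ᶠ n : ℕ in atTop, ∀ k : ℕ, k ≤ n * (n - 1) → |zval (n * (n - 1)) (p n) k| ≤ T →
      (zval (n * (n - 1)) (p n) k ≤ x - δ → 1 - η ≤ PrDnm n k (fun D =>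
        0 < dirHamCount n D ∧
            Real.log (Real.exp (β n ^ 2 / 2) * (dirHamCount n D : ℝ) /
              ExDnp n (p n) (fun D' => (dirHamCount n D' : ℝ))) / β n ≤ x)) ∧
      (x + δ < zval (n * (n - 1)) (p n) k → PrDnm n k (fun D =>
        0 < dirHamCount n D ∧
            Real.log (Real.exp (β n ^ 2 / 2) * (dirHamCount n D : ℝ) /
              ExDnp n (p n) (fun D' => (dirHamCount n D' : ℝ))) / β n ≤ x) ≤ η) := by
  set b : ℝ := Real.sqrt (1 - c) with hb
  have hb0 : 0 < b := Real.sqrt_pos.2 (by linarith)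
  -- a relative error `ε` of the count moves the normalised logarithm by at most `2ε/b ≤ δ/2`
  set ε : ℝ := min (1 / 2) (δ * b / 4) with hε
  have hε0 : 0 < ε := by rw [hε]; apply lt_min <;> positivity
  have hε1 : ε ≤ 1 / 2 := min_le_left _ _
  have hε2 : ε ≤ δ * b / 4 := min_le_right _ _
  obtain ⟨K, hK4, hK⟩ := concentration ε η hε0 hη
  have hp2n : Tendsto (fun n : ℕ => p n ^ 2 * n) atTop atTop := by
    have := hpn.atTop_mul_atTop₀ hpn
    refine this.congr fun n => ?_
    have : Real.sqrt n * Real.sqrt n = n := Real.mul_self_sqrt (by positivity)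
    calc _ = p n ^ 2 * (Real.sqrt n * Real.sqrt n) := by ring
      _ = _ := by rw [this]
  have hC0 : Tendsto (fun n : ℕ => (4 * T ^ 2 + 8) / (p n ^ 2 * n)) atTop (nhds 0) :=
    hp2n.const_div_atTop _
  have herr : Tendsto (fun n : ℕ => T / ((n : ℝ) - 1) +
      4 * ((4 * T ^ 2 + 8) / (p n ^ 2 * n)) / b) atTop (nhds 0) := by
    have h1 : Tendsto (fun n : ℕ => T / ((n : ℝ) - 1)) atTop (nhds 0) :=
      (tendsto_atTop_add_const_right _ (-1) tendsto_natCast_atTop_atTop).const_div_atTop _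
    have h2 := (hC0.const_mul 4).div_const b
    have := h1.add h2
    simpa using this
  filter_upwards [eventually_ge_atTop 2, hpc, hC0.eventually_le_const (by norm_num : (0:ℝ) < 1 / 4),
    herr.eventually_le_const (half_pos hδ), hpn.eventually_ge_atTop (4 * K)]
    with n hn hpcn hsmall herrn hKn
  intro k hkL hz
  obtain ⟨hp0, hp1⟩ := hp n
  have hn2 : (2 : ℝ) ≤ n := by exact_mod_cast hn
  have hbβ : b ≤ β n := by
    rw [hβ n, hb]
    apply Real.sqrt_le_sqrt
    rw [le_div_iff₀ hp0]
    nlinarith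
  have hβ0 : 0 < β n := lt_of_lt_of_le hb0 hbβ
  obtain ⟨hk1, hk2⟩ := typical_arc_count hn hp0 hp1 (hβ n) hb0 hbβ hz hsmall
  have hLc : ((n * (n - 1) : ℕ) : ℝ) = n * (n - 1) := by
    rw [Nat.cast_mul, Nat.cast_sub (by omega)]; simp
  have hss : Real.sqrt n * Real.sqrt n = n := Real.mul_self_sqrt (by positivity)
  have hKk : K * (n * Real.sqrt n) ≤ k := by
    refine le_trans ?_ hk1
    rw [hLc]
    calc K * (n * Real.sqrt n) = (4 * K) * (n * Real.sqrt n) / 4 := by ring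
      _ ≤ (p n * Real.sqrt n) * (n * Real.sqrt n) / 4 := by gcongr
      _ = p n * (n * (Real.sqrt n * Real.sqrt n)) / 4 := by ring
      _ = p n * (n * (n / 2)) / 2 := by rw [hss]; ring
      _ ≤ p n * (n * (n - 1)) / 2 := by gcongr; linarith
  have hnk : n ≤ k := by
    have hs1 : 1 ≤ Real.sqrt n := by rw [Real.one_le_sqrt]; linarith
    have : (n : ℝ) ≤ k := by
      refine le_trans ?_ hKk
      have : (n : ℝ) ≤ n * Real.sqrt n := by nlinarith
      nlinarith
    exact_mod_cast this
  have hkL' : k ≤ (arcsAll n).card := by rwa [card_arcsAll]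
  have hconc := hK n k hn hkL hKk
  set μ := ExDnm n k (fun D' => (dirHamCount n D' : ℝ)) with hμ
  set lam := ExDnp n (p n) (fun D' => (dirHamCount n D' : ℝ)) with hlam
  set z := zval (n * (n - 1)) (p n) k with hzdef
  have hq0 : 0 < inclProb (n * (n - 1)) k n := inclProb_pos hkL hnk
  have hμe : μ = (n - 1).factorial * inclProb (n * (n - 1)) k n := by
    rw [hμ, ExDnm_dirHamCount hn hkL' hnk, card_arcsAll]
  have hlame : lam = (n - 1).factorial * p n ^ n := ExDnp_dirHamCount hn (p n)
  have hfac : (0 : ℝ) < (n - 1).factorial := by positivity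
  have hμ0 : 0 < μ := by rw [hμe]; positivity
  have hlam0 : 0 < lam := by rw [hlame]; positivity
  have hratio : Real.log (inclProb (n * (n - 1)) k n / p n ^ n) = Real.log μ - Real.log lam := by
    rw [← Real.log_div hμ0.ne' hlam0.ne', hμe, hlame, mul_div_mul_left _ _ hfac.ne']
  rw [hratio] at hk2
  have key : ∀ D : Finset (Fin n × Fin n), ¬ ε < |(dirHamCount n D : ℝ) / μ - 1| →
      0 < dirHamCount n D ∧ |Real.log (Real.exp (β n ^ 2 / 2) * (dirHamCount n D : ℝ) / lam) / β n
        - z| ≤ δ := by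
    intro D hD
    obtain ⟨hX, hl⟩ := abs_log_le_of_ratio hμ0 hε1 (not_lt.1 hD)
    refine ⟨by exact_mod_cast hX, ?_⟩
    rw [Real.log_div (by positivity) hlam0.ne', Real.log_mul (by positivity) hX.ne', Real.log_exp]
    have e : (β n ^ 2 / 2 + Real.log (dirHamCount n D) - Real.log lam) / β n - z =
        (Real.log (dirHamCount n D) - Real.log μ) / β n +
          ((Real.log μ - Real.log lam + β n ^ 2 / 2) / β n - z) := by ring
    rw [e]
    refine (abs_add_le _ _).trans ?_
    have h1 : |(Real.log (dirHamCount n D) - Real.log μ) / β n| ≤ δ / 2 := by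
      rw [abs_div, abs_of_pos hβ0, div_le_iff₀ hβ0]
      refine hl.trans ?_
      have : δ * b ≤ δ * β n := by gcongr
      linarith
    linarith
  constructor
  · intro hzx
    have := one_le_PrDnm_add hkL' (A := fun D =>
        0 < dirHamCount n D ∧
            Real.log (Real.exp (β n ^ 2 / 2) * (dirHamCount n D : ℝ) / lam) / β n ≤ x)
      (B := fun D => ε < |(dirHamCount n D : ℝ) / μ - 1|) ?_
    · linarith
    · intro D
      by_cases hD : ε < |(dirHamCount n D : ℝ) / μ - 1|
      · exact Or.inr hD
      · obtain ⟨h1, h2⟩ := key D hD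
        exact Or.inl ⟨h1, by linarith [(abs_le.1 h2).2]⟩
  · intro hzx
    refine le_trans (PrDnm_mono ?_) hconc
    rintro D ⟨-, hA⟩
    by_contra hD
    obtain ⟨h1, h2⟩ := key D hD
    linarith [(abs_le.1 h2).1]

/-- Comparison of a mixture `∑ W k Q k` with the distribution function of `z`, when `Q` is close
to the indicator of `z ≤ x` outside `|z| > T`. -/
lemma mixture_sandwich (M : ℕ) (W Q z : ℕ → ℝ) (x T δ η : ℝ) (hη : 0 < η) (hT : 0 < T)
    (hW : ∀ k, 0 ≤ W k) (hW1 : ∑ k ∈ range (M + 1), W k = 1)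
    (hQ0 : ∀ k, 0 ≤ Q k) (hQ1 : ∀ k, Q k ≤ 1)
    (h : ∀ k, k ≤ M → |z k| ≤ T → (z k ≤ x - δ → 1 - η ≤ Q k) ∧ (x + δ < z k → Q k ≤ η))
    (F : ℝ → ℝ) (hF : ∀ y, F y = ∑ k ∈ (range (M + 1)).filter (fun k => z k ≤ y), W k) :
    F (x - δ) - η - (F (-T) + (1 - F T)) ≤ ∑ k ∈ range (M + 1), W k * Q k ∧
      ∑ k ∈ range (M + 1), W k * Q k ≤ F (x + δ) + η + (F (-T) + (1 - F T)) := by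
  have hFi : ∀ y, F y = ∑ k ∈ range (M + 1), W k * (if z k ≤ y then 1 else 0) := by
    intro y
    rw [hF, Finset.sum_filter]
    refine Finset.sum_congr rfl fun k _ => ?_
    split_ifs <;> simp
  have hηs : η = ∑ k ∈ range (M + 1), W k * η := by rw [← Finset.sum_mul, hW1, one_mul]
  have htail : F (-T) + (1 - F T) = ∑ k ∈ range (M + 1),
      W k * ((if z k ≤ -T then 1 else 0) + (1 - if z k ≤ T then 1 else 0)) := by
    simp only [mul_add, mul_sub, Finset.sum_add_distrib, Finset.sum_sub_distrib, ← hFi, mul_one,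
      hW1]
  rw [htail, hFi (x - δ), hFi (x + δ)]
  constructor
  · conv_lhs => rw [hηs]
    rw [← Finset.sum_sub_distrib, ← Finset.sum_sub_distrib]
    refine Finset.sum_le_sum fun k hk => ?_
    rw [← mul_sub, ← mul_sub]
    apply mul_le_mul_of_nonneg_left _ (hW k)
    have hk' : k ≤ M := Nat.lt_succ_iff.1 (mem_range.1 hk)
    have h0 := hQ0 k
    by_cases h1 : z k ≤ -T
    · have h2 : z k ≤ T := by linarith
      simp only [h1, h2, if_true]
      split_ifs <;> linarith
    · by_cases h2 : z k ≤ T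
      · have := (h k hk' (abs_le.2 ⟨by linarith, h2⟩)).1
        simp only [h1, h2, if_true, if_false]
        split_ifs with h3
        · linarith [this h3]
        · linarith
      · simp only [h1, h2, if_false]
        split_ifs <;> linarith
  · conv_rhs => rw [hηs]
    rw [← Finset.sum_add_distrib, ← Finset.sum_add_distrib]
    refine Finset.sum_le_sum fun k hk => ?_
    rw [← mul_add, ← mul_add]
    apply mul_le_mul_of_nonneg_left _ (hW k)
    have hk' : k ≤ M := Nat.lt_succ_iff.1 (mem_range.1 hk)
    have h0 := hQ1 k
    by_cases h1 : z k ≤ -T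
    · have h2 : z k ≤ T := by linarith
      simp only [h1, h2, if_true]
      split_ifs <;> linarith
    · by_cases h2 : z k ≤ T
      · have := (h k hk' (abs_le.2 ⟨by linarith, h2⟩)).2
        simp only [h1, h2, if_true, if_false]
        split_ifs with h3
        · linarith
        · linarith [this (not_le.1 h3)]
      · simp only [h1, h2, if_false]
        split_ifs <;> linarith

/-- The binomial number of arcs has variance tending to infinity. -/
lemma tendsto_variance (p : ℕ → ℝ) (hp : ∀ n : ℕ, 0 < p n ∧ p n < 1)
    (hpn : Tendsto (fun n : ℕ => p n * Real.sqrt n) atTop atTop)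
    (c : ℝ) (hc : c < 1) (hpc : ∀ᶠ n : ℕ in atTop, p n ≤ c) :
    Tendsto (fun n : ℕ => ((n * (n - 1) : ℕ) : ℝ) * p n * (1 - p n)) atTop atTop := by
  have h1 : Tendsto (fun n : ℕ => (1 - c) / 2 * (p n * Real.sqrt n)) atTop atTop :=
    hpn.const_mul_atTop (by linarith)
  refine tendsto_atTop_mono' _ ?_ h1
  filter_upwards [eventually_ge_atTop 2, hpc] with n hn hpcn
  have hn2 : (2 : ℝ) ≤ n := by exact_mod_cast hn
  obtain ⟨hp0, hp1⟩ := hp n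
  have hLc : ((n * (n - 1) : ℕ) : ℝ) = n * (n - 1) := by
    rw [Nat.cast_mul, Nat.cast_sub (by omega)]; simp
  have hss : Real.sqrt n * Real.sqrt n = n := Real.mul_self_sqrt (by positivity)
  have hs1 : 1 ≤ Real.sqrt n := by rw [Real.one_le_sqrt]; linarith
  have hsL : Real.sqrt n / 2 ≤ ((n * (n - 1) : ℕ) : ℝ) := by
    rw [hLc]; nlinarith
  calc (1 - c) / 2 * (p n * Real.sqrt n) = (Real.sqrt n / 2) * p n * (1 - c) := by ring
    _ ≤ ((n * (n - 1) : ℕ) : ℝ) * p n * (1 - p n) := by gcongr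

lemma two_mul_Nn (n : ℕ) : 2 * (Nn n : ℝ) = ((n * (n - 1) : ℕ) : ℝ) := by
  have : 2 * Nn n = n * (n - 1) := by
    rw [Nn, Nat.choose_two_right]
    exact Nat.mul_div_cancel' (Nat.even_mul_pred_self n).two_dvd
  exact_mod_cast this

/-- **Theorem 3.6 (directed Hamilton cycles).**  If `m = p·2N` and `p ≫ n^{-1/2}`, then the
number `X_n` of directed Hamilton cycles satisfies `X_n/μ_n → 1` in probability in `D(n,m)`;
if moreover `limsup p < 1`, then `ln(e^{β_n²/2}X_n/λ_n)/β_n →d 𝒩(0,1)` in `D(n,p)`,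
where `β_n = √((1-p)/p)`. -/
theorem directed_hamilton_cycles
    (p : ℕ → ℝ) (m : ℕ → ℕ) (β : ℕ → ℝ)
    (hp : ∀ n : ℕ, 0 < p n ∧ p n < 1)
    (hm : ∀ n : ℕ, (m n : ℝ) = p n * (2 * (Nn n : ℝ)))
    (hpn : Tendsto (fun n : ℕ => p n * Real.sqrt n) atTop atTop)
    (hβ : ∀ n : ℕ, β n = Real.sqrt ((1 - p n) / p n)) :
    -- concentration in `D(n,m)`
    ((∀ ε : ℝ, 0 < ε →
      Tendsto (fun n : ℕ => PrDnm n (m n) fun D =>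
          ε < |(dirHamCount n D : ℝ) /
            ExDnm n (m n) (fun D' => (dirHamCount n D' : ℝ)) - 1|)
        atTop (nhds 0)) ∧
    -- log-normality in `D(n,p)`, assuming `limsup p < 1`
    ((∃ c : ℝ, c < 1 ∧ ∀ᶠ n : ℕ in atTop, p n ≤ c) →
      ∀ x : ℝ,
        Tendsto (fun n : ℕ => PrDnp n (p n) fun D =>
            0 < dirHamCount n D ∧
            Real.log (Real.exp (β n ^ 2 / 2) * (dirHamCount n D : ℝ) /
              ExDnp n (p n) (fun D' => (dirHamCount n D' : ℝ))) / β n ≤ x)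
          atTop (nhds (stdNormalCDF x)))) := by
  constructor
  · intro ε hε
    rw [Metric.tendsto_nhds]
    intro η hη
    obtain ⟨K, hK4, hK⟩ := concentration ε (η / 2) hε (half_pos hη)
    filter_upwards [eventually_ge_atTop 2, hpn.eventually_ge_atTop (2 * K)] with n hn hKn
    obtain ⟨hp0, hp1⟩ := hp n
    have hn2 : (2 : ℝ) ≤ n := by exact_mod_cast hn
    have hLc : ((n * (n - 1) : ℕ) : ℝ) = n * (n - 1) := by
      rw [Nat.cast_mul, Nat.cast_sub (by omega)]; simp
    have hss : Real.sqrt n * Real.sqrt n = n := Real.mul_self_sqrt (by positivity)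
    have hmn := hm n
    rw [two_mul_Nn] at hmn
    have hmL : m n ≤ n * (n - 1) := by
      have : (m n : ℝ) ≤ ((n * (n - 1) : ℕ) : ℝ) := by
        rw [hmn]; exact mul_le_of_le_one_left (by positivity) hp1.le
      exact_mod_cast this
    have hKm : K * (n * Real.sqrt n) ≤ m n := by
      rw [hmn, hLc]
      calc K * (n * Real.sqrt n) = (2 * K) * (n * Real.sqrt n) / 2 := by ring
        _ ≤ (p n * Real.sqrt n) * (n * Real.sqrt n) / 2 := by gcongr
        _ = p n * (n * (Real.sqrt n * Real.sqrt n)) / 2 := by ring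
        _ = p n * (n * (n / 2)) := by rw [hss]; ring
        _ ≤ p n * (n * (n - 1)) := by gcongr; linarith
    have := hK n (m n) hn hmL hKm
    rw [Real.dist_eq, sub_zero, abs_of_nonneg (PrDnm_nonneg _ _ _)]
    linarith
  · rintro ⟨c, hc, hpc⟩ x
    rw [Metric.tendsto_nhds]
    intro κ hκ
    -- `κ/6` each for moving `x` by `δ`, for atypical digraphs given `k`, for the tails `|z| > T`,
    -- and for the convergence in `n`
    have hcont := continuous_stdNormalCDF.tendsto x
    obtain ⟨δ', hδ', hΦ⟩ := Metric.tendsto_nhds_nhds.1 hcont (κ / 6) (by positivity)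
    set δ := δ' / 2 with hδdef
    have hδ : 0 < δ := half_pos hδ'
    have hΦp := hΦ (x := x + δ) (by rw [Real.dist_eq, add_sub_cancel_left, abs_of_pos hδ]; linarith)
    have hΦm := hΦ (x := x - δ) (by
      rw [Real.dist_eq, sub_sub_cancel_left, abs_neg, abs_of_pos hδ]; linarith)
    rw [Real.dist_eq] at hΦp hΦm
    have htop : Tendsto stdNormalCDF atTop (nhds 1) := by
      have := ProbabilityTheory.tendsto_cdf_atTop (ProbabilityTheory.gaussianReal 0 1)
      exact this.congr fun y => (stdNormalCDF_eq_cdf y).symm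
    have hbot : Tendsto (fun T : ℝ => stdNormalCDF (-T)) atTop (nhds 0) := by
      have := (ProbabilityTheory.tendsto_cdf_atBot (ProbabilityTheory.gaussianReal 0 1)).comp
        tendsto_neg_atTop_atBot
      exact this.congr fun y => (stdNormalCDF_eq_cdf (-y)).symm
    have htails : Tendsto (fun T : ℝ => stdNormalCDF (-T) + (1 - stdNormalCDF T)) atTop
        (nhds 0) := by
      have := hbot.add (htop.const_sub 1)
      simpa using this
    obtain ⟨T, hT0, hT⟩ := ((eventually_gt_atTop (0 : ℝ)).and
      (htails.eventually_lt_const (by positivity : 0 < κ / 6))).exists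
    have hclt := binomial_clt (fun n => n * (n - 1)) p hp (tendsto_variance p hp hpn c hc hpc)
    set F : ℕ → ℝ → ℝ := fun n y => ∑ k ∈ (range (n * (n - 1) + 1)).filter
      (fun k => zval (n * (n - 1)) (p n) k ≤ y), binW (n * (n - 1)) (p n) k with hF
    have hlo : Tendsto (fun n => F n (x - δ) - κ / 6 - (F n (-T) + (1 - F n T))) atTop
        (nhds (stdNormalCDF (x - δ) - κ / 6 - (stdNormalCDF (-T) + (1 - stdNormalCDF T)))) :=
      ((hclt (x - δ)).sub_const _).sub ((hclt (-T)).add ((hclt T).const_sub 1))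
    have hhi : Tendsto (fun n => F n (x + δ) + κ / 6 + (F n (-T) + (1 - F n T))) atTop
        (nhds (stdNormalCDF (x + δ) + κ / 6 + (stdNormalCDF (-T) + (1 - stdNormalCDF T)))) :=
      ((hclt (x + δ)).add_const _).add ((hclt (-T)).add ((hclt T).const_sub 1))
    filter_upwards [conditional_prob p β hp hpn hβ c hc hpc x T δ (κ / 6) hδ (by positivity),
      hlo.eventually_const_lt (sub_lt_self _ (by positivity : 0 < κ / 6)),
      hhi.eventually_lt_const (lt_add_of_pos_right _ (by positivity : 0 < κ / 6))]
      with n hcond h1 h2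
    have hs := mixture_sandwich (n * (n - 1)) (binW (n * (n - 1)) (p n)) _
      (zval (n * (n - 1)) (p n)) x T δ (κ / 6) (by positivity) hT0
      (binW_nonneg (hp n).1.le (hp n).2.le) (sum_binW _ _) (fun k => PrDnm_nonneg n k _)
      (fun k => PrDnm_le_one n k _) hcond (F n) (fun y => rfl)
    rw [PrDnp_eq_sum, card_arcsAll, Real.dist_eq, abs_lt]
    rw [abs_lt] at hΦp hΦm
    constructor <;> linarith [hs.1, hs.2, hΦp.1, hΦp.2, hΦm.1, hΦm.2]
end
end
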